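/- arXiv:math/0611020 — 2 statements merged into one kernel-verified Lean document; each statement's English description precedes it below -/
import Mathlib

section
/- Let d be a positive integer and ℓ = (ℓ_1,...,ℓ_n) ∈ ℕ^n. There exists a nonzero strongly stable monomial ideal I in K[x_1,...,x_n] generated in degree d with ℓ(I) = ℓ if and only if ℓ is an M-vector with ℓ_2 ≤ d. -/
set_option synthInstance.maxHeartbeats 1000000
set_option maxHeartbeats 1000000

open MvPolynomial

namespace Paper

/-! ### Combinatorics of monomials -/

/-- a monomial in `n` variables, encoded by its exponent vector -/
abbrev Mono (n : ℕ) := Fin n →₀ ℕ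

/-- total degree of a monomial -/
def mdeg {n : ℕ} (u : Mono n) : ℕ := u.sum fun _ e => e

/-- `maxVar u` is the largest index (1-indexed) of a variable dividing `u`; `maxVar 1 = 0`. -/
def maxVar {n : ℕ} (u : Mono n) : ℕ := u.support.sup fun i => (i : ℕ) + 1

/-- `LexGT u v` : `u >_lex v` (lexicographic order with `x_1 > x_2 > ⋯ > x_n`). -/
def LexGT {n : ℕ} (u v : Mono n) : Prop :=
  ∃ i : Fin n, v i < u i ∧ ∀ j : Fin n, j < i → u j = v j

/-- strongly stable set of monomials -/
def SStableSet {n : ℕ} (V : Set (Mono n)) : Prop :=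
  ∀ u : Mono n, ∀ p q : Fin n, p < q → u + Finsupp.single q 1 ∈ V →
    u + Finsupp.single p 1 ∈ V

/-- `Dk V k = { u / x_k : u ∈ V, max(u) = k }` (here `k : Fin n` is the 0-indexed variable,
corresponding to the 1-indexed variable `k+1`) -/
def Dk {n : ℕ} (V : Set (Mono n)) (k : Fin n) : Set (Mono n) :=
  {w | w + Finsupp.single k 1 ∈ V ∧ maxVar (w + Finsupp.single k 1) = (k : ℕ) + 1}

/-- `Mle j W = { u ∈ W : max(u) ≤ j }` -/
def Mle {n : ℕ} (j : ℕ) (W : Set (Mono n)) : Set (Mono n) := {u ∈ W | maxVar u ≤ j}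

/-- `L` is a lexsegment set of monomials inside `K[x_1,…,x_k]`. -/
def LexSegIn {n : ℕ} (k : ℕ) (L : Set (Mono n)) : Prop :=
  (∀ u ∈ L, maxVar u ≤ k) ∧
  ∀ u ∈ L, ∀ v : Mono n, mdeg v = mdeg u → maxVar v ≤ k → LexGT v u → v ∈ L

/-- `V` is a `d`-linear lexsegment set of monomials of degree `d`. -/
def DLinearLexSeg {n : ℕ} (d : ℕ) (V : Set (Mono n)) : Prop :=
  (∀ u ∈ V, mdeg u = d) ∧ SStableSet V ∧
    ∀ k : Fin n, LexSegIn ((k : ℕ) + 1) (Dk V k)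

/-! ### Ideal-level notions -/

variable {n : ℕ} {K : Type} [Field K]

/-- `I` is a monomial ideal. -/
def MonomialIdeal (I : Ideal (MvPolynomial (Fin n) K)) : Prop :=
  ∀ p ∈ I, ∀ m ∈ p.support, (monomial m (1 : K)) ∈ I

/-- `u` is a minimal monomial generator of the monomial ideal `I`. -/
def MinGen (I : Ideal (MvPolynomial (Fin n) K)) (u : Mono n) : Prop :=
  monomial u (1 : K) ∈ I ∧ ∀ v : Mono n, v ≤ u → v ≠ u → monomial v (1 : K) ∉ I

/-- stable monomial ideal -/
def StableIdeal (I : Ideal (MvPolynomial (Fin n) K)) : Prop :=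
  MonomialIdeal I ∧
  ∀ u : Mono n, ∀ q : Fin n, maxVar u = (q : ℕ) + 1 → monomial u (1 : K) ∈ I →
    ∀ p : Fin n, p < q →
      monomial (u - Finsupp.single q 1 + Finsupp.single p 1) (1 : K) ∈ I

/-- strongly stable monomial ideal -/
def SStableIdeal (I : Ideal (MvPolynomial (Fin n) K)) : Prop :=
  MonomialIdeal I ∧
  ∀ u : Mono n, ∀ q : Fin n, 0 < u q → monomial u (1 : K) ∈ I →
    ∀ p : Fin n, p < q →
      monomial (u - Finsupp.single q 1 + Finsupp.single p 1) (1 : K) ∈ I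

/-- the set of (exponent vectors of) monomials of degree `k` lying in `I` -/
def monSlice (I : Ideal (MvPolynomial (Fin n) K)) (k : ℕ) : Set (Mono n) :=
  {u | mdeg u = k ∧ monomial u (1 : K) ∈ I}

/-- homogeneous (graded) ideal -/
def HomIdeal (I : Ideal (MvPolynomial (Fin n) K)) : Prop :=
  ∀ p ∈ I, ∀ k : ℕ, homogeneousComponent k p ∈ I

/-! ### Graded components and Hilbert functions -/

/-- the degree-`z` homogeneous component of `I`, as a `K`-subspace -/
noncomputable def hComp (I : Ideal (MvPolynomial (Fin n) K)) (z : ℤ) :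
    Submodule K (MvPolynomial (Fin n) K) :=
  if 0 ≤ z then
    (Submodule.restrictScalars K I) ⊓ homogeneousSubmodule (Fin n) K z.toNat
  else ⊥

/-- Hilbert function `H(I,t)` of the ideal `I` -/
noncomputable def hfI (I : Ideal (MvPolynomial (Fin n) K)) (t : ℕ) : ℕ :=
  Module.finrank K (hComp I (t : ℤ))

/-- Hilbert function `H(S/I,t)` of the quotient `S/I` -/
noncomputable def hfQ (I : Ideal (MvPolynomial (Fin n) K)) (t : ℕ) : ℕ :=
  Module.finrank K
    (homogeneousSubmodule (Fin n) K t ⧸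
      Submodule.comap (homogeneousSubmodule (Fin n) K t).subtype
        (Submodule.restrictScalars K I))

/-! ### Macaulay operators and M-vectors -/

/-- Macaulay upper operator `a^{⟨t⟩}` (`macUp t a`):
if `a = C(a_t,t) + ⋯ + C(a_j,j)` is the `t`-th Macaulay representation then
`a^{⟨t⟩} = C(a_t+1,t+1) + ⋯ + C(a_j+1,j+1)`; also `0^{⟨t⟩} = 0`. -/
noncomputable def macUp : ℕ → ℕ → ℕ
  | 0, _ => 0
  | _ + 1, 0 => 0
  | (t + 1), (a + 1) =>
    let c := sSup {c : ℕ | Nat.choose c (t + 1) ≤ a + 1}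
    Nat.choose (c + 1) (t + 2) + macUp t ((a + 1) - Nat.choose c (t + 1))

/-- Macaulay operator `a^{(t)}` (`macSq t a`):
if `a = C(a_t,t) + ⋯ + C(a_j,j)` is the `t`-th Macaulay representation then
`a^{(t)} = C(a_t+1,t) + ⋯ + C(a_j+1,j)`; also `0^{(t)} = 0`. -/
noncomputable def macSq : ℕ → ℕ → ℕ
  | 0, _ => 0
  | _ + 1, 0 => 0
  | (t + 1), (a + 1) =>
    let c := sSup {c : ℕ | Nat.choose c (t + 1) ≤ a + 1}
    Nat.choose (c + 1) (t + 1) + macSq t ((a + 1) - Nat.choose c (t + 1))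

/-- `(ℓ 0, ℓ 1, …, ℓ (n-1)) = (h_0,…,h_{n-1})` is an M-vector:
`h_0 = 1` and `h_{t+1} ≤ h_t^{⟨t⟩}` for all `t ≥ 1`. -/
def MVector {n : ℕ} (ℓ : Fin n → ℕ) : Prop :=
  (∀ h0 : 0 < n, ℓ ⟨0, h0⟩ = 1) ∧
  ∀ t : ℕ, 1 ≤ t → ∀ (h1 : t < n) (h2 : t + 1 < n),
    ℓ ⟨t + 1, h2⟩ ≤ macUp t (ℓ ⟨t, h1⟩)

/-! ### Numerical properties of the Macaulay operator -/

theorem choose_pascal (c t : ℕ) : (c + 1).choose (t + 1) = c.choose t + c.choose (t + 1) :=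
  Nat.choose_succ_succ c t

theorem macUp_zero_right (t : ℕ) : macUp t 0 = 0 := by
  cases t <;> simp [macUp]

/-- Computing `macUp` by splitting off the leading binomial coefficient. -/
theorem macUp_choose_add {t c r : ℕ} (hr : r < c.choose t) :
    macUp (t + 1) (c.choose (t + 1) + r) = (c + 1).choose (t + 1 + 1) + macUp t r := by
  have htc : t ≤ c := by
    by_contra h
    rw [Nat.choose_eq_zero_of_lt (by omega)] at hr
    omega
  obtain h0 | ⟨a, ha⟩ : c.choose (t + 1) + r = 0 ∨ ∃ a, c.choose (t + 1) + r = a + 1 := by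
    cases c.choose (t + 1) + r <;> simp
  · have hr0 : r = 0 := by omega
    have hc : c < t + 1 := Nat.choose_eq_zero_iff.mp (by omega)
    rw [h0, hr0, macUp_zero_right, macUp_zero_right, Nat.choose_eq_zero_of_lt (by omega)]
  · have hlt : a + 1 < (c + 1).choose (t + 1) := by
      rw [choose_pascal]
      omega
    have hsup : sSup {c : ℕ | Nat.choose c (t + 1) ≤ a + 1} = c := by
      apply IsGreatest.csSup_eq
      refine ⟨by rw [Set.mem_ofPred_eq]; omega, fun b hb => ?_⟩
      rw [Set.mem_ofPred_eq] at hb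
      by_contra h
      have := Nat.choose_le_choose (t + 1) (show c + 1 ≤ b by omega)
      omega
    rw [ha, macUp, hsup, ← ha, Nat.add_sub_cancel_left]

theorem macUp_choose (t c : ℕ) :
    macUp (t + 1) (c.choose (t + 1)) = (c + 1).choose (t + 1 + 1) := by
  by_cases h : t ≤ c
  · simpa [macUp_zero_right] using macUp_choose_add (r := 0) (Nat.choose_pos h)
  · rw [Nat.choose_eq_zero_of_lt (by omega), Nat.choose_eq_zero_of_lt (by omega),
      macUp_zero_right]

theorem macUp_choose_add_of_le {t c r : ℕ} (hr : r ≤ c.choose (t + 1)) :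
    macUp (t + 1 + 1) (c.choose (t + 1 + 1) + r) =
      (c + 1).choose (t + 1 + 1 + 1) + macUp (t + 1) r := by
  obtain h | rfl := hr.lt_or_eq
  · exact macUp_choose_add h
  · rw [add_comm (c.choose _), ← choose_pascal, macUp_choose, macUp_choose,
      choose_pascal (c + 1), add_comm]

theorem exists_choose_add (t a : ℕ) :
    ∃ c r, t ≤ c ∧ a = c.choose (t + 1) + r ∧ r < c.choose t := by
  induction a with
  | zero => exact ⟨t, 0, le_rfl, by simp, by simp⟩
  | succ a ih =>
    obtain ⟨c, r, htc, rfl, hr⟩ := ih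
    by_cases h : r + 1 < c.choose t
    · exact ⟨c, r + 1, htc, by ring, h⟩
    · refine ⟨c + 1, 0, by omega, ?_, Nat.choose_pos (by omega)⟩
      rw [choose_pascal]
      omega

theorem macUp_one (a : ℕ) : macUp 1 a = (a + 1).choose 2 := by
  simpa using macUp_choose 0 a

theorem macUp_strictMono (t : ℕ) : StrictMono (macUp (t + 1)) := by
  induction t with
  | zero =>
    refine strictMono_nat_of_lt_succ fun a => ?_
    rw [macUp_one, macUp_one, choose_pascal (a + 1) 1]
    simp
  | succ t ih =>
    refine strictMono_nat_of_lt_succ fun a => ?_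
    obtain ⟨c, r, htc, rfl, hr⟩ := exists_choose_add (t + 1) a
    rw [macUp_choose_add hr, add_assoc (c.choose _), macUp_choose_add_of_le hr]
    exact Nat.add_lt_add_left (ih (Nat.lt_succ_self r)) _

theorem macUp_mono (t : ℕ) : Monotone (macUp t) := by
  cases t with
  | zero => exact fun _ _ _ => by simp [macUp]
  | succ t => exact (macUp_strictMono t).monotone

theorem macUp_add_le (t a e : ℕ) : macUp (t + 1) a + e ≤ macUp (t + 1) (a + e) := by
  induction e with
  | zero => simp
  | succ e ih =>
    have := macUp_strictMono t (Nat.lt_succ_self (a + e))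
    rw [Nat.succ_eq_add_one, add_assoc a] at this
    omega

/-- The Macaulay growth condition from degree `t` to degree `t + 1`: an order ideal of monomials
with `s` elements of degree `t` can have `a` elements of degree `t + 1`. In degree `0` this only
says that `a` vanishes if `s` does. -/
def Growth (t a s : ℕ) : Prop :=
  (t = 0 ∧ (a = 0 ∨ 1 ≤ s)) ∨ (1 ≤ t ∧ a ≤ macUp t s)

theorem Growth.mono {t a s s' : ℕ} (h : Growth t a s) (hs : s ≤ s') : Growth t a s' := by
  obtain ⟨h0, h⟩ | ⟨h1, h⟩ := h
  · exact Or.inl ⟨h0, by omega⟩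
  · exact Or.inr ⟨h1, h.trans (macUp_mono t hs)⟩

theorem growth_self (t a : ℕ) : Growth t a a := by
  cases t with
  | zero => exact Or.inl ⟨rfl, by omega⟩
  | succ t => exact Or.inr ⟨by omega, (macUp_strictMono t).le_apply⟩

theorem Growth.sub_le {t r s c : ℕ} (h : Growth t r s) (hr : r < (c + 1).choose (t + 1)) :
    r - s ≤ c.choose (t + 1) := by
  have p := choose_pascal c t
  obtain ⟨rfl, h⟩ | ⟨h1, h⟩ := h
  · simp at *
    omega
  · obtain ⟨t, rfl⟩ : ∃ t', t = t' + 1 := ⟨t - 1, by omega⟩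
    by_cases hs : c.choose (t + 1) ≤ s
    · omega
    · have := macUp_add_le t s (c.choose (t + 1) - s)
      rw [Nat.add_sub_cancel' (by omega), macUp_choose] at this
      omega

theorem Growth.add_macUp_le {t a s : ℕ} (h : Growth t a s) :
    a + macUp (t + 1) (a - s) ≤ macUp (t + 1) a := by
  induction t generalizing a s with
  | zero =>
    obtain ⟨-, rfl | hs1⟩ | ⟨h, -⟩ := h
    · simp [macUp_zero_right]
    · obtain rfl | ⟨a, rfl⟩ : a = 0 ∨ ∃ a', a = a' + 1 := by cases a <;> simp
      · simp [macUp_zero_right]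
      · refine (Nat.add_le_add_left (macUp_mono 1 (show a + 1 - s ≤ a by omega)) _).trans ?_
        rw [macUp_one, macUp_one, choose_pascal (a + 1) 1]
        simp
    · omega
  | succ t ih =>
    obtain ⟨b, r, htc, rfl, hr⟩ := exists_choose_add (t + 1) a
    obtain ⟨c, rfl⟩ : ∃ c, b = c + 1 := ⟨b - 1, by omega⟩
    obtain ⟨h, -⟩ | ⟨-, h⟩ := h
    · omega
    have hs1 : c.choose (t + 1) ≤ s := by
      by_contra hlt
      have := macUp_strictMono t (not_le.mp hlt)
      rw [macUp_choose] at this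
      omega
    obtain ⟨s, rfl⟩ := Nat.exists_eq_add_of_le hs1
    have p1 := choose_pascal c (t + 1)
    have p2 := choose_pascal (c + 1) (t + 1 + 1)
    have p3 := choose_pascal c t
    have hg : Growth t r s := by
      by_cases hs' : s < c.choose t
      · rw [macUp_choose_add hs'] at h
        cases t with
        | zero => exact Or.inl ⟨rfl, by simp [macUp] at h; omega⟩
        | succ t => exact Or.inr ⟨by omega, by omega⟩
      · cases t with
        | zero => exact Or.inl ⟨rfl, by simp at *; omega⟩
        | succ t =>
          refine Or.inr ⟨by omega, ?_⟩
          have := macUp_mono (t + 1) (not_lt.mp hs')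
          rw [macUp_choose] at this
          omega
    rw [macUp_choose_add hr]
    by_cases hrs : s ≤ r
    · rw [show (c + 1).choose (t + 1 + 1) + r - (c.choose (t + 1) + s)
        = c.choose (t + 1 + 1) + (r - s) by omega, macUp_choose_add_of_le (hg.sub_le hr)]
      have := ih hg
      omega
    · have h2 := macUp_mono (t + 1 + 1) (show (c + 1).choose (t + 1 + 1) + r
        - (c.choose (t + 1) + s) ≤ c.choose (t + 1 + 1) by omega)
      rw [macUp_choose] at h2
      have := (macUp_strictMono t).le_apply (x := r)
      omega

/-! ### Monomials -/

theorem mdeg_eq_sum {n : ℕ} (u : Mono n) : mdeg u = ∑ i, u i :=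
  Finsupp.sum_fintype u _ fun _ => rfl

theorem mdeg_add {n : ℕ} (u v : Mono n) : mdeg (u + v) = mdeg u + mdeg v := by
  simp [mdeg_eq_sum, Finset.sum_add_distrib]

theorem mdeg_single {n : ℕ} (i : Fin n) (e : ℕ) : mdeg (Finsupp.single i e) = e := by
  simp [mdeg]

theorem maxVar_le_iff {n : ℕ} {u : Mono n} {k : ℕ} :
    maxVar u ≤ k ↔ ∀ i : Fin n, k ≤ i → u i = 0 := by
  simp only [maxVar, Finset.sup_le_iff, Finsupp.mem_support_iff]
  refine forall_congr' fun i => ⟨fun h hi => ?_, fun h hi => ?_⟩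
  · by_contra h0
    have := h h0
    omega
  · by_contra h0
    exact hi (h (by omega))

theorem maxVar_eq_iff {n : ℕ} {u : Mono n} {k : Fin n} :
    maxVar u = (k : ℕ) + 1 ↔ u k ≠ 0 ∧ ∀ i, k < i → u i = 0 := by
  have h1 := maxVar_le_iff (u := u) (k := (k : ℕ) + 1)
  have h2 := maxVar_le_iff (u := u) (k := k)
  refine ⟨fun h => ⟨fun h0 => ?_, fun i hi => h1.mp h.le i hi⟩, fun ⟨h0, h⟩ => ?_⟩
  · have : maxVar u ≤ k := h2.mpr fun i hi => by
      obtain rfl | hi := (show k ≤ i from hi).eq_or_lt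
      · exact h0
      · exact h1.mp h.le i hi
    omega
  · have h3 := h1.mpr fun i hi => h i hi
    by_contra hne
    exact h0 (h2.mp (by omega) k le_rfl)

theorem exists_maxVar_eq {n : ℕ} {u : Mono n} (h : mdeg u ≠ 0) :
    ∃ k : Fin n, maxVar u = (k : ℕ) + 1 := by
  obtain h0 | ⟨m, hm⟩ : maxVar u = 0 ∨ ∃ m, maxVar u = m + 1 := by cases maxVar u <;> simp
  · exact absurd (by simp [mdeg_eq_sum, maxVar_le_iff.mp h0.le]) h
  · have hn : m < n := by
      have : maxVar u ≤ n := maxVar_le_iff.mpr fun i hi => absurd i.2 (by omega)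
      omega
    exact ⟨⟨m, hn⟩, hm⟩

/-- The monomials whose product with the variable `x` lies in `W`. -/
noncomputable def divVar {n : ℕ} (W : Finset (Mono n)) (x : Fin n) : Finset (Mono n) :=
  W.preimage (· + Finsupp.single x 1) (add_left_injective _).injOn

theorem mem_divVar {n : ℕ} {W : Finset (Mono n)} {x : Fin n} {u : Mono n} :
    u ∈ divVar W x ↔ u + Finsupp.single x 1 ∈ W := by
  simp [divVar]

theorem sub_single_add_single {n : ℕ} {u : Mono n} {x : Fin n} (h : u x ≠ 0) :
    u - Finsupp.single x 1 + Finsupp.single x 1 = u :=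
  tsub_add_cancel_of_le (Finsupp.single_le_iff.mpr (by omega))

theorem card_divVar {n : ℕ} (W : Finset (Mono n)) (x : Fin n) :
    (divVar W x).card = (W.filter fun u => u x ≠ 0).card := by
  refine Finset.card_bij (fun u _ => u + Finsupp.single x 1) (fun u hu => ?_)
    (fun _ _ _ _ h => add_left_injective _ h) fun u hu => ?_
  · simpa using mem_divVar.mp hu
  · rw [Finset.mem_filter] at hu
    exact ⟨u - Finsupp.single x 1, mem_divVar.mpr (by rw [sub_single_add_single hu.2]; exact hu.1),
      sub_single_add_single hu.2⟩

/-! ### Growth of strongly stable sets -/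

/-- A strongly stable set of monomials in `x_0, …, x_{k+1}` is controlled by its members
not involving `x_{k+1}`. -/
theorem SStableSet.growth {n k e : ℕ} (hk : k + 1 < n) {W : Finset (Mono n)}
    (hdeg : ∀ u ∈ W, mdeg u = e) (hsupp : ∀ u ∈ W, ∀ i : Fin n, k + 1 < (i : ℕ) → u i = 0)
    (hW : SStableSet (W : Set (Mono n))) :
    Growth k W.card (W.filter fun u => u ⟨k + 1, hk⟩ = 0).card := by
  induction k generalizing e W with
  | zero => ?_
  | succ k ihk => ?_
  all_goals
    induction e generalizing W with
    | zero =>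
      rw [Finset.filter_true_of_mem]
      · exact growth_self _ _
      · intro u hu
        have := hdeg u hu
        rw [mdeg_eq_sum, Finset.sum_eq_zero_iff] at this
        exact this _ (Finset.mem_univ _)
    | succ e ihe => ?_
  all_goals
    generalize hx : (⟨_, hk⟩ : Fin n) = x at *
    have hxv := congrArg Fin.val hx
    simp only at hxv
    generalize hy : (⟨_, (Nat.lt_succ_self _).trans hk⟩ : Fin n) = y
    have hyv := congrArg Fin.val hy
    simp only at hyv
    have hyx : y < x := by
      rw [Fin.lt_def]
      omega
    set A := W.filter fun u => u x = 0 with hA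
    have hB := ihe (W := divVar W x) (fun u hu => by
        have := hdeg _ (mem_divVar.mp hu)
        rw [mdeg_add, mdeg_single] at this
        omega) (fun u hu i hi => by
        have := hsupp _ (mem_divVar.mp hu) i hi
        rw [Finsupp.add_apply] at this
        omega) (fun u p q hpq hu => by
        rw [Finset.mem_coe, mem_divVar, add_right_comm] at hu ⊢
        exact hW _ p q hpq hu)
    have hcard : A.card + (divVar W x).card = W.card := by
      rw [card_divVar]
      exact Finset.card_filter_add_card_filter_not _
    have hB0 : ((divVar W x).filter fun u => u x = 0).card ≤ (A.filter fun u => u y ≠ 0).card := by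
      refine Finset.card_le_card_of_injOn (· + Finsupp.single y 1) (fun u hu => ?_)
        (add_left_injective _).injOn
      simp only [Finset.coe_filter, Set.mem_ofPred_eq, mem_divVar] at hu
      simp only [hA, Finset.coe_filter, Set.mem_ofPred_eq, Finset.mem_filter, Finsupp.add_apply]
      refine ⟨⟨hW _ y x hyx hu.1, ?_⟩, by simp⟩
      rw [hu.2, Finsupp.single_eq_of_ne hyx.ne', add_zero]
    have hA0 : (A.filter fun u => u y = 0).card + (A.filter fun u => u y ≠ 0).card = A.card :=
      Finset.card_filter_add_card_filter_not _
  · obtain ⟨-, h⟩ | ⟨h, -⟩ := hB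
    · exact Or.inl ⟨rfl, by omega⟩
    · omega
  · have hAg : Growth k A.card (A.filter fun u => u y = 0).card := by
      rw [← hy]
      refine ihk (e := e + 1) _ (fun u hu => hdeg u (Finset.mem_filter.mp hu).1)
        (fun u hu i hi => ?_) fun u p q hpq hu => ?_
      · rw [hA, Finset.mem_filter] at hu
        obtain h | h := (show k + 1 + 1 ≤ i from hi).eq_or_lt
        · rw [show i = x from Fin.ext (by omega)]
          exact hu.2
        · exact hsupp u hu.1 i h
      · rw [Finset.mem_coe, hA, Finset.mem_filter] at hu ⊢
        refine ⟨hW u p q hpq hu.1, ?_⟩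
        have h0 : u x = 0 := by
          have := hu.2
          rw [Finsupp.add_apply] at this
          omega
        have hp : p ≠ x := by
          rintro rfl
          have := hsupp _ hu.1 q (by rw [Fin.lt_def] at hpq; omega)
          simp at this
        rw [Finsupp.add_apply, h0, Finsupp.single_eq_of_ne hp.symm, add_zero]
    obtain ⟨h, -⟩ | ⟨-, h⟩ := hB
    · omega
    refine Or.inr ⟨by omega, ?_⟩
    have h1 := macUp_mono (k + 1) (hB0.trans (show _ ≤ A.card - _ from Nat.le_sub_of_add_le
      (by rw [add_comm]; exact hA0.le)))
    have := hAg.add_macUp_le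
    omega

theorem SStableSet.growth_card_maxVar {n d k : ℕ} (hk : k + 1 < n) {V : Finset (Mono n)}
    (hdeg : ∀ u ∈ V, mdeg u = d) (hV : SStableSet (V : Set (Mono n))) :
    Growth k (V.filter fun u => maxVar u = k + 1 + 1).card
      (V.filter fun u => maxVar u = k + 1).card := by
  have hkx (u : Mono n) := maxVar_eq_iff (u := u) (k := ⟨k + 1, hk⟩)
  have hky (u : Mono n) := maxVar_eq_iff (u := u) (k := ⟨k, by omega⟩)
  set x : Fin n := ⟨k + 1, hk⟩ with hx
  set y : Fin n := ⟨k, by omega⟩ with hy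
  have hyx : y < x := by simp [hx, hy]
  set W := divVar (V.filter fun u => maxVar u = k + 1 + 1) x with hWdef
  have hmem (u : Mono n) : u ∈ W ↔ u + Finsupp.single x 1 ∈ V ∧ ∀ i, x < i → u i = 0 := by
    rw [hWdef, mem_divVar, Finset.mem_filter, hkx]
    refine and_congr_right fun _ => ⟨fun h i hi => ?_, fun h => ⟨by simp, fun i hi => ?_⟩⟩
    · have := h.2 i hi
      rw [Finsupp.add_apply] at this
      omega
    · rw [Finsupp.add_apply, h i hi, Finsupp.single_eq_of_ne hi.ne', add_zero]
  have hcard : W.card = (V.filter fun u => maxVar u = k + 1 + 1).card := by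
    rw [hWdef, card_divVar, Finset.filter_true_of_mem]
    exact fun u hu => ((hkx u).mp (Finset.mem_filter.mp hu).2).1
  rw [← hcard]
  refine (SStableSet.growth (e := d - 1) hk (fun u hu => ?_) (fun u hu i hi => ?_) ?_).mono
    (s := (W.filter fun u => u x = 0).card) ?_
  · have := hdeg _ ((hmem u).mp hu).1
    rw [mdeg_add, mdeg_single] at this
    omega
  · exact ((hmem u).mp hu).2 i hi
  · intro u p q hpq hu
    rw [Finset.mem_coe, hmem] at hu ⊢
    refine ⟨by rw [add_right_comm] at hu ⊢; exact hV _ p q hpq hu.1, fun i hi => ?_⟩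
    have h0 := hu.2 i hi
    rw [Finsupp.add_apply] at h0 ⊢
    have hpi : p ≠ i := by
      rintro rfl
      simpa using hu.2 q (hi.trans hpq)
    rw [Finsupp.single_eq_of_ne hpi.symm]
    omega
  · refine Finset.card_le_card_of_injOn (· + Finsupp.single y 1) (fun u hu => ?_)
      (add_left_injective _).injOn
    simp only [Finset.coe_filter, Set.mem_ofPred_eq, hmem] at hu
    simp only [Finset.coe_filter, Set.mem_ofPred_eq]
    refine ⟨hV _ y x hyx hu.1.1, (hky _).mpr ⟨by simp, fun i hi => ?_⟩⟩
    rw [Finsupp.add_apply, Finsupp.single_eq_of_ne hi.ne', add_zero]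
    obtain rfl | h : x = i ∨ x < i := (show x ≤ i by rw [Fin.lt_def] at hi; exact hi).eq_or_lt
    · exact hu.2
    · exact hu.1.2 i h

theorem SStableSet.mVector {n d : ℕ} (hn : 0 < n) (hd : 0 < d) {V : Finset (Mono n)}
    (hne : V.Nonempty) (hdeg : ∀ u ∈ V, mdeg u = d) (hV : SStableSet (V : Set (Mono n)))
    {ℓ : Fin n → ℕ} (hℓ : ∀ k : Fin n, (V.filter fun u => maxVar u = (k : ℕ) + 1).card = ℓ k) :
    MVector ℓ ∧ ∀ h2 : 1 < n, ℓ ⟨1, h2⟩ ≤ d := by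
  have hgrowth (k : ℕ) (hk : k + 1 < n) : Growth k (ℓ ⟨k + 1, hk⟩) (ℓ ⟨k, by omega⟩) := by
    rw [← hℓ, ← hℓ]
    exact hV.growth_card_maxVar hk hdeg
  refine ⟨⟨fun h0 => le_antisymm ?_ ?_, fun t ht h1 h2 => ?_⟩, fun h2 => ?_⟩
  · rw [← hℓ, Finset.card_le_one]
    suffices h : ∀ u ∈ V.filter fun u => maxVar u = 0 + 1, u = Finsupp.single ⟨0, h0⟩ d from
      fun u hu v hv => (h u hu).trans (h v hv).symm
    intro u hu
    rw [Finset.mem_filter] at hu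
    have h : ∀ i, i ≠ ⟨0, h0⟩ → u i = 0 := fun i hi =>
      maxVar_le_iff.mp hu.2.le i (by
        by_contra hlt
        exact hi (Fin.ext (by simp only; omega)))
    have hsum := hdeg u hu.1
    rw [mdeg_eq_sum, Finset.sum_eq_single ⟨0, h0⟩ (fun i _ hi => h i hi) (by simp)] at hsum
    ext i
    by_cases hi : i = ⟨0, h0⟩
    · rw [hi, hsum, Finsupp.single_eq_same]
    · rw [h i hi, Finsupp.single_eq_of_ne hi]
  · by_contra hlt
    have hzero : ∀ k (hk : k < n), ℓ ⟨k, hk⟩ = 0 := by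
      intro k
      induction k with
      | zero => exact fun _ => by omega
      | succ k ih =>
        intro hk
        have := ih (by omega)
        obtain ⟨-, h⟩ | ⟨-, h⟩ := hgrowth k hk
        · omega
        · rw [this, macUp_zero_right] at h
          omega
    obtain ⟨u, hu⟩ := hne
    obtain ⟨k, hk⟩ := exists_maxVar_eq (u := u) (by rw [hdeg u hu]; omega)
    have := hzero k k.2
    rw [← hℓ, Finset.card_eq_zero] at this
    exact Finset.notMem_empty u (this ▸ Finset.mem_filter.mpr ⟨hu, hk⟩)
  · obtain ⟨h, -⟩ | ⟨-, h⟩ := hgrowth t h2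
    · omega
    · exact h
  · rw [← hℓ]
    have hsum : ∀ u ∈ V.filter (fun u => maxVar u = 1 + 1), u ⟨0, hn⟩ + u ⟨1, h2⟩ = d := by
      intro u hu
      rw [Finset.mem_filter] at hu
      rw [← hdeg u hu.1, mdeg_eq_sum, Fintype.sum_eq_add ⟨0, hn⟩ ⟨1, h2⟩ (by simp)]
      intro i hi
      refine maxVar_le_iff.mp hu.2.le i ?_
      by_contra hlt
      obtain h | h : (i : ℕ) = 0 ∨ (i : ℕ) = 1 := by omega
      · exact hi.1 (Fin.ext h)
      · exact hi.2 (Fin.ext h)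
    refine (Finset.card_le_card_of_injOn (t := Finset.Icc 1 d) (fun u => u ⟨1, h2⟩)
      (fun u hu => ?_) fun u hu v hv huv => ?_).trans (by simp)
    · have h1 := hsum u hu
      have h2 := (maxVar_eq_iff (k := ⟨1, h2⟩)).mp (Finset.mem_filter.mp hu).2
      simp only [Finset.coe_Icc, Set.mem_Icc]
      omega
    · have h1 := hsum u hu
      have h1' := hsum v hv
      simp only at huv
      ext i
      by_cases hi : 1 < (i : ℕ)
      · rw [maxVar_le_iff.mp (Finset.mem_filter.mp hu).2.le i hi,
          maxVar_le_iff.mp (Finset.mem_filter.mp hv).2.le i hi]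
      · obtain h | h : i = ⟨0, hn⟩ ∨ i = ⟨1, h2⟩ := by
          simp only [Fin.ext_iff]
          omega
        · rw [h]
          omega
        · rw [h, huv]

/-! ### Binomial ranks of monotone sequences -/

/-- The number whose Macaulay representation is encoded by a monotone sequence `T`. -/
def binomRank (T : ℕ → ℕ) (t : ℕ) : ℕ := ∑ s ∈ Finset.range t, (T s + s).choose (s + 1)

theorem binomRank_succ (T : ℕ → ℕ) (t : ℕ) :
    binomRank T (t + 1) = binomRank T t + (T t + t).choose (t + 1) :=
  Finset.sum_range_succ _ _

theorem binomRank_congr {T T' : ℕ → ℕ} {t : ℕ} (h : ∀ s < t, T s = T' s) :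
    binomRank T t = binomRank T' t :=
  Finset.sum_congr rfl fun s hs => by rw [h s (Finset.mem_range.mp hs)]

theorem binomRank_mono {T T' : ℕ → ℕ} (h : ∀ s, T s ≤ T' s) (t : ℕ) :
    binomRank T t ≤ binomRank T' t :=
  Finset.sum_le_sum fun s _ => Nat.choose_le_choose _ (Nat.add_le_add_right (h s) s)

theorem binomRank_lt {T : ℕ → ℕ} (hT : Monotone T) (t : ℕ) :
    binomRank T t < (T t + t).choose t := by
  induction t with
  | zero => simp [binomRank]
  | succ t ih =>
    have h := Nat.choose_le_choose (t + 1) (show T t + t + 1 ≤ T (t + 1) + (t + 1) by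
      have := hT (Nat.le_succ t)
      rw [Nat.succ_eq_add_one] at this
      omega)
    rw [choose_pascal] at h
    rw [binomRank_succ]
    omega

theorem le_of_binomRank_le {T T' : ℕ → ℕ} (hT' : Monotone T') {t : ℕ}
    (h : binomRank T (t + 1) ≤ binomRank T' (t + 1)) : T t ≤ T' t := by
  by_contra! hlt
  have h1 := Nat.choose_le_choose (t + 1) (show T' t + t + 1 ≤ T t + t by omega)
  have h2 := binomRank_lt hT' t
  rw [choose_pascal] at h1
  rw [binomRank_succ, binomRank_succ] at h
  omega

theorem binomRank_injective {T T' : ℕ → ℕ} (hT : Monotone T) (hT' : Monotone T') {t : ℕ}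
    (h : binomRank T t = binomRank T' t) : ∀ s < t, T s = T' s := by
  induction t with
  | zero => omega
  | succ t ih =>
    have ht := (le_of_binomRank_le hT' h.le).antisymm (le_of_binomRank_le hT h.ge)
    rw [binomRank_succ, binomRank_succ, ht] at h
    intro s hs
    obtain h' | rfl := (Nat.lt_succ_iff.mp hs).lt_or_eq
    · exact ih (by omega) s h'
    · exact ht

theorem exists_binomRank_eq {t M r : ℕ} (hr : r < (M + t).choose t) :
    ∃ T : ℕ → ℕ, Monotone T ∧ (∀ s, t ≤ s → T s = M) ∧ binomRank T t = r := by
  induction t generalizing M r with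
  | zero => exact ⟨fun _ => M, monotone_const, fun _ _ => rfl, by simp [binomRank] at *; omega⟩
  | succ t ih =>
    obtain ⟨c, r', htc, rfl, hr'⟩ := exists_choose_add t r
    obtain ⟨m, rfl⟩ : ∃ m, c = m + t := ⟨c - t, by omega⟩
    have hm : m ≤ M := by
      by_contra hlt
      have := Nat.choose_le_choose (t + 1) (show M + (t + 1) ≤ m + t by omega)
      omega
    obtain ⟨T, hT, hTm, rfl⟩ := ih hr'
    have hle : ∀ s, T s ≤ m := fun s => (hT (le_max_left s t)).trans (hTm _ (le_max_right s t)).le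
    refine ⟨fun s => if s ≤ t then T s else M, fun a b hab => ?_, fun s hs => ?_, ?_⟩
    · have := hT hab
      have := hle a
      simp only
      split_ifs <;> omega
    · exact if_neg (by omega)
    · rw [binomRank_succ, if_pos le_rfl, hTm t le_rfl, add_comm]
      exact congrArg _ (binomRank_congr fun s hs => if_pos hs.le)

theorem macUp_binomRank {T : ℕ → ℕ} (hT : Monotone T) (t : ℕ) :
    macUp t (binomRank T t) = ∑ s ∈ Finset.range t, (T s + s + 1).choose (s + 1 + 1) := by
  induction t with
  | zero => simp [macUp]
  | succ t ih =>
    rw [binomRank_succ, add_comm (binomRank T t), macUp_choose_add (binomRank_lt hT t), ih,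
      Finset.sum_range_succ, add_comm]

/-! ### Tail degrees -/

/-- The degree of the part of a monomial involving only the variables `x_j, x_{j+1}, …`. -/
def tailDeg {n : ℕ} (u : Mono n) (j : ℕ) : ℕ :=
  ∑ i ∈ Finset.univ.filter fun i : Fin n => j ≤ (i : ℕ), u i

theorem tailDeg_zero {n : ℕ} (u : Mono n) : tailDeg u 0 = mdeg u := by
  simp [tailDeg, mdeg_eq_sum]

theorem tailDeg_add {n : ℕ} (u v : Mono n) (j : ℕ) :
    tailDeg (u + v) j = tailDeg u j + tailDeg v j := by
  simp [tailDeg, Finset.sum_add_distrib]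

theorem tailDeg_single {n : ℕ} (i : Fin n) (e j : ℕ) :
    tailDeg (Finsupp.single i e) j = if j ≤ (i : ℕ) then e else 0 := by
  simp [tailDeg, Finsupp.single_apply, Finset.sum_ite_eq]

theorem tailDeg_antitone {n : ℕ} (u : Mono n) : Antitone (tailDeg u) := fun _ _ hab =>
  Finset.sum_le_sum_of_subset fun i hi => by
    simp only [Finset.mem_filter] at hi ⊢
    exact ⟨hi.1, hab.trans hi.2⟩

theorem tailDeg_eq_zero {n : ℕ} {u : Mono n} {j : ℕ} (h : maxVar u ≤ j) : tailDeg u j = 0 :=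
  Finset.sum_eq_zero fun i hi => maxVar_le_iff.mp h i (Finset.mem_filter.mp hi).2

theorem tailDeg_eq_add {n : ℕ} (u : Mono n) (i : Fin n) :
    tailDeg u i = u i + tailDeg u (i + 1) := by
  have : (Finset.univ.filter fun k : Fin n => (i : ℕ) ≤ k)
      = insert i (Finset.univ.filter fun k : Fin n => (i : ℕ) + 1 ≤ k) := by
    ext k
    simp only [Finset.mem_filter, Finset.mem_insert, Finset.mem_univ, true_and, Fin.ext_iff]
    omega
  rw [tailDeg, this, Finset.sum_insert (by simp), tailDeg]

theorem ext_tailDeg {n : ℕ} {u v : Mono n} (h : ∀ j, tailDeg u j = tailDeg v j) : u = v := by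
  ext i
  have h1 := tailDeg_eq_add u i
  have h2 := tailDeg_eq_add v i
  rw [h, h] at h1
  omega

theorem exists_tailDeg_eq {n : ℕ} {g : ℕ → ℕ} (hg : Antitone g) (hgn : g n = 0) :
    ∃ u : Mono n, ∀ j, tailDeg u j = g j := by
  refine ⟨Finsupp.equivFunOnFinite.symm fun i => g i - g (i + 1), fun j => ?_⟩
  obtain hj | hj := le_total n j
  · rw [tailDeg_eq_zero (maxVar_le_iff.mpr fun i hi => absurd i.2 (by omega))]
    have := hg hj
    omega
  · induction hj using Nat.decreasingInduction with
    | self =>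
      rw [hgn, tailDeg_eq_zero (maxVar_le_iff.mpr fun i hi => absurd i.2 (by omega))]
    | of_succ j hj ih =>
      have h := tailDeg_eq_add (Finsupp.equivFunOnFinite.symm fun i : Fin n => g i - g (i + 1))
        ⟨j, hj⟩
      have := hg (Nat.le_succ j)
      simp only [Finsupp.equivFunOnFinite_symm_apply_apply] at h ih
      rw [Nat.succ_eq_add_one] at this
      omega

/-! ### Sets of monomials of bounded rank -/

/-- For a monomial `u = w x_k` with largest variable `x_k`, the number of monomials in
`x_0, …, x_k` of the degree of `w` which are lexicographically larger than `w`. -/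
def lexRank {n : ℕ} (k : ℕ) (u : Mono n) : ℕ := binomRank (fun s => tailDeg u (k - s) - 1) k

theorem monotone_tailDeg_sub {n : ℕ} (u : Mono n) (k : ℕ) :
    Monotone fun s => tailDeg u (k - s) - 1 := fun _ _ hab =>
  Nat.sub_le_sub_right (tailDeg_antitone u (by omega)) 1

theorem tailDeg_pos {n : ℕ} {u : Mono n} {k : Fin n} (h : u k ≠ 0) {j : ℕ} (hj : j ≤ k) :
    0 < tailDeg u j := by
  have h1 := tailDeg_eq_add u k
  have h2 := tailDeg_antitone u hj
  omega

open Classical in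
/-- The set of monomials of degree `d` which contains, for each `k`, the `ℓ k` lexicographically
largest monomials with largest variable `x_k`. -/
noncomputable def lexRankSet {n : ℕ} (d : ℕ) (ℓ : Fin n → ℕ) : Finset (Mono n) :=
  (Finset.finsuppAntidiag Finset.univ d).filter fun u =>
    ∃ k : Fin n, maxVar u = (k : ℕ) + 1 ∧ lexRank k u < ℓ k

theorem mem_lexRankSet {n d : ℕ} {ℓ : Fin n → ℕ} {u : Mono n} :
    u ∈ lexRankSet d ℓ ↔
      mdeg u = d ∧ ∃ k : Fin n, maxVar u = (k : ℕ) + 1 ∧ lexRank k u < ℓ k := by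
  simp [lexRankSet, mdeg_eq_sum]

theorem mem_lexRankSet_of_maxVar {n d : ℕ} {ℓ : Fin n → ℕ} {u : Mono n} {k : Fin n}
    (hk : maxVar u = (k : ℕ) + 1) :
    u ∈ lexRankSet d ℓ ↔ mdeg u = d ∧ lexRank k u < ℓ k := by
  rw [mem_lexRankSet]
  refine and_congr_right fun _ => ⟨fun ⟨k', hk', h⟩ => ?_, fun h => ⟨k, hk, h⟩⟩
  rwa [show k = k' from Fin.ext (by omega)]

theorem card_lexRankSet {n d : ℕ} (hd : 0 < d) {ℓ : Fin n → ℕ} (k : Fin n)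
    (hℓ : ℓ k ≤ (d - 1 + k).choose k) :
    ((lexRankSet d ℓ).filter fun u => maxVar u = (k : ℕ) + 1).card = ℓ k := by
  rw [← Finset.card_range (ℓ k)]
  refine Finset.card_bij (fun u _ => lexRank k u) (fun u hu => ?_) (fun u hu v hv huv => ?_)
    fun r hr => ?_
  · rw [Finset.mem_filter] at hu
    rw [Finset.mem_range]
    exact ((mem_lexRankSet_of_maxVar hu.2).mp hu.1).2
  · rw [Finset.mem_filter] at hu hv
    refine ext_tailDeg fun j => ?_
    obtain rfl | hj0 := Nat.eq_zero_or_pos j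
    · rw [tailDeg_zero, tailDeg_zero, (mem_lexRankSet.mp hu.1).1, (mem_lexRankSet.mp hv.1).1]
    obtain hj | hj := le_or_gt j k
    · have h := binomRank_injective (monotone_tailDeg_sub u k) (monotone_tailDeg_sub v k) huv
        (k - j) (by omega)
      simp only [Nat.sub_sub_self hj] at h
      have h1 := tailDeg_pos (maxVar_eq_iff.mp hu.2).1 hj
      have h2 := tailDeg_pos (maxVar_eq_iff.mp hv.2).1 hj
      omega
    · rw [tailDeg_eq_zero (hu.2.trans_le hj), tailDeg_eq_zero (hv.2.trans_le hj)]
  · rw [Finset.mem_range] at hr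
    obtain ⟨T, hT, hTd, hTr⟩ := exists_binomRank_eq (hr.trans_le hℓ)
    obtain ⟨u, hu⟩ := exists_tailDeg_eq (n := n)
      (g := fun j => if (k : ℕ) < j then 0 else T (k - j) + 1)
      (fun a b hab => by
        have := hT (show k - b ≤ k - a by omega)
        simp only
        split_ifs <;> omega) (if_pos k.2)
    have hmax : maxVar u = (k : ℕ) + 1 := by
      rw [maxVar_eq_iff]
      refine ⟨?_, fun i hi => ?_⟩
      · have := tailDeg_eq_add u k
        rw [hu, hu, if_neg (by omega), if_pos (by omega)] at this
        omega
      · have := tailDeg_eq_add u i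
        rw [hu, if_pos (show (k : ℕ) < i from hi)] at this
        omega
    have hrank : lexRank k u = r := by
      rw [← hTr]
      refine binomRank_congr fun s hs => ?_
      rw [hu, if_neg (by omega), Nat.sub_sub_self hs.le, Nat.add_sub_cancel]
    refine ⟨u, ?_, hrank⟩
    rw [Finset.mem_filter, mem_lexRankSet_of_maxVar hmax, hrank, ← tailDeg_zero, hu,
      if_neg (by omega), hTd _ (by omega)]
    exact ⟨⟨by omega, hr⟩, hmax⟩

theorem maxVar_add_single {n : ℕ} {u : Mono n} {p : Fin n} :
    maxVar (u + Finsupp.single p 1) = max (maxVar u) ((p : ℕ) + 1) := by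
  refine eq_of_forall_ge_iff fun k => ?_
  simp only [max_le_iff, maxVar_le_iff, Finsupp.add_apply, Finsupp.single_apply]
  refine ⟨fun h => ⟨fun i hi => ?_, ?_⟩, fun h i hi => ?_⟩
  · have := h i hi
    omega
  · by_contra hlt
    have := h p (by omega)
    simp at this
  · have hpi : p ≠ i := by
      rintro rfl
      omega
    rw [h.1 i hi, if_neg hpi, add_zero]

/-- Replacing the last variable of a monomial by its predecessor. -/
theorem lexRank_add_single_succ {n : ℕ} {u : Mono n} {p q : Fin n} (hpq : (q : ℕ) = p + 1)
    (hu : maxVar u ≤ q) :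
    lexRank q (u + Finsupp.single q 1) = macUp p (lexRank p (u + Finsupp.single p 1)) := by
  rw [lexRank, lexRank, macUp_binomRank (monotone_tailDeg_sub _ _), binomRank, hpq,
    Finset.sum_range_succ']
  simp only [tailDeg_add, tailDeg_single, ← hpq]
  rw [show tailDeg u (q - 0) = 0 from tailDeg_eq_zero hu]
  simp only [Nat.sub_zero, le_refl, if_true]
  refine (add_zero _).trans (Finset.sum_congr rfl fun s hs => ?_)
  rw [if_pos (by omega), if_pos (by omega), show (q : ℕ) - (s + 1) = p - s by omega]
  rfl

theorem sstableSet_lexRankSet {n d : ℕ} {ℓ : Fin n → ℕ} (hℓ : MVector ℓ) :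
    SStableSet (lexRankSet d ℓ : Set (Mono n)) := by
  suffices h : ∀ (m : ℕ) (u : Mono n) (p q : Fin n), (q : ℕ) = m → p < q →
      u + Finsupp.single q 1 ∈ lexRankSet d ℓ → u + Finsupp.single p 1 ∈ lexRankSet d ℓ from
    fun u p q => h q u p q rfl
  intro m
  induction m with
  | zero => exact fun u p q hq hpq => by rw [Fin.lt_def] at hpq; omega
  | succ m ih =>
    intro u p q hq hpq hu
    rw [Fin.lt_def] at hpq
    obtain ⟨hdeg, k, hk, hrank⟩ := mem_lexRankSet.mp hu
    rw [mdeg_add, mdeg_single] at hdeg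
    have hmaxq := hk
    rw [maxVar_add_single] at hmaxq
    by_cases hmax : maxVar u ≤ q
    · have hkq : k = q := Fin.ext (by omega)
      subst hkq
      let y : Fin n := ⟨m, by omega⟩
      have hy : u + Finsupp.single y 1 ∈ lexRankSet d ℓ := by
        have hmaxy : maxVar (u + Finsupp.single y 1) = (y : ℕ) + 1 := by
          rw [maxVar_add_single]
          simp only [y]
          omega
        rw [mem_lexRankSet_of_maxVar hmaxy, mdeg_add, mdeg_single]
        refine ⟨hdeg, ?_⟩
        by_contra! hle
        obtain hm0 | hm0 := Nat.eq_zero_or_pos m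
        · have h1 := hℓ.1 (by omega)
          rw [show y = ⟨0, by omega⟩ from Fin.ext hm0, h1] at hle
          simp [lexRank, binomRank] at hle
        · have h1 := hℓ.2 m hm0 y.2 (by omega)
          have h2 := macUp_mono m hle
          rw [lexRank_add_single_succ (p := y) hq hmax] at hrank
          rw [show (⟨m + 1, by omega⟩ : Fin n) = k from Fin.ext hq.symm] at h1
          exact absurd (h1.trans h2) (not_le.mpr hrank)
      obtain h | h := (show (p : ℕ) ≤ m by omega).eq_or_lt
      · rwa [show p = y from Fin.ext h]
      · exact ih u p y rfl h hy
    · have hmaxp : maxVar (u + Finsupp.single p 1) = (k : ℕ) + 1 := by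
        rw [maxVar_add_single]
        omega
      rw [mem_lexRankSet_of_maxVar hmaxp, mdeg_add, mdeg_single]
      refine ⟨hdeg, (binomRank_mono (fun s => ?_) _).trans_lt hrank⟩
      rw [tailDeg_add, tailDeg_add, tailDeg_single, tailDeg_single]
      split_ifs <;> omega

theorem MVector.le_choose {n d : ℕ} (hd : 0 < d) {ℓ : Fin n → ℕ} (hℓ : MVector ℓ)
    (hℓ1 : ∀ h2 : 1 < n, ℓ ⟨1, h2⟩ ≤ d) (k : Fin n) : ℓ k ≤ (d - 1 + k).choose k := by
  obtain ⟨k, hk⟩ := k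
  induction k with
  | zero => simp [hℓ.1 hk]
  | succ k ih =>
    obtain rfl | hk0 := Nat.eq_zero_or_pos k
    · have := hℓ1 hk
      simp only [zero_add, Nat.choose_one_right]
      omega
    · obtain ⟨t, rfl⟩ : ∃ t, k = t + 1 := ⟨k - 1, by omega⟩
      refine (hℓ.2 _ hk0 (by omega) hk).trans ((macUp_mono _ (ih (by omega))).trans ?_)
      rw [macUp_choose]
      rfl

/-! ### Ideals generated by strongly stable sets -/

theorem mdeg_mono {n : ℕ} {u v : Mono n} (h : u ≤ v) : mdeg u ≤ mdeg v := by
  rw [mdeg_eq_sum, mdeg_eq_sum]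
  exact Finset.sum_le_sum fun i _ => h i

theorem eq_of_le_of_mdeg_le {n : ℕ} {u v : Mono n} (h : u ≤ v) (hd : mdeg v ≤ mdeg u) : u = v := by
  rw [mdeg_eq_sum, mdeg_eq_sum] at hd
  ext i
  exact (Finset.sum_eq_sum_iff_of_le fun i _ => h i).mp
    ((Finset.sum_le_sum fun i _ => h i).antisymm hd) i (Finset.mem_univ i)

section MonomialSpan

variable {n d : ℕ} {K : Type} [Field K]

theorem monomial_mem_span_iff {V : Set (Mono n)} {u : Mono n} :
    monomial u (1 : K) ∈ Ideal.span ((fun v => monomial v (1 : K)) '' V) ↔ ∃ v ∈ V, v ≤ u := by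
  classical
  rw [mem_ideal_span_monomial_image, support_monomial, if_neg one_ne_zero]
  simp

theorem minGen_span_iff {V : Set (Mono n)} (hdeg : ∀ u ∈ V, mdeg u = d) {u : Mono n} :
    MinGen (Ideal.span ((fun v => monomial v (1 : K)) '' V)) u ↔ u ∈ V := by
  simp only [MinGen, monomial_mem_span_iff]
  refine ⟨fun ⟨⟨v, hv, hvu⟩, h⟩ => ?_, fun hu => ⟨⟨u, hu, le_rfl⟩, fun v hvu hne => ?_⟩⟩
  · by_contra hu
    exact h v hvu (fun h => hu (h ▸ hv)) ⟨v, hv, le_rfl⟩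
  · rintro ⟨w, hw, hwv⟩
    refine hne (eq_of_le_of_mdeg_le hvu ?_)
    rw [hdeg u hu, ← hdeg w hw]
    exact mdeg_mono hwv

theorem sstableIdeal_span {V : Set (Mono n)} (hV : SStableSet V) :
    SStableIdeal (Ideal.span ((fun v => monomial v (1 : K)) '' V)) := by
  refine ⟨fun p hp m hm => ?_, fun u q hq hu p hpq => ?_⟩
  · rw [mem_ideal_span_monomial_image] at hp
    exact monomial_mem_span_iff.mpr (hp m hm)
  · rw [monomial_mem_span_iff] at hu ⊢
    obtain ⟨v, hv, hvu⟩ := hu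
    by_cases hvq : v q = 0
    · refine ⟨v, hv, fun i => ?_⟩
      have := hvu i
      rw [Finsupp.add_apply, Finsupp.tsub_apply, Finsupp.single_apply (a := q)]
      split_ifs with h
      · rw [← h, hvq]
        exact Nat.zero_le _
      · omega
    · refine ⟨v - Finsupp.single q 1 + Finsupp.single p 1, hV _ p q hpq ?_, ?_⟩
      · rwa [sub_single_add_single hvq]
      · gcongr

theorem exists_minGen_le {I : Ideal (MvPolynomial (Fin n) K)} {u : Mono n}
    (hu : monomial u (1 : K) ∈ I) : ∃ v, MinGen I v ∧ v ≤ u := by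
  induction h : mdeg u using Nat.strong_induction_on generalizing u with
  | _ e ih =>
    subst h
    by_cases hmin : MinGen I u
    · exact ⟨u, hmin, le_rfl⟩
    · simp only [MinGen, not_and, not_forall, not_not] at hmin
      obtain ⟨v, hvu, hne, hv⟩ := hmin hu
      obtain ⟨w, hw, hwv⟩ := ih _ (lt_of_not_ge fun h => hne (eq_of_le_of_mdeg_le hvu h)) hv rfl
      exact ⟨w, hw, hwv.trans hvu⟩

theorem SStableIdeal.sstableSet {I : Ideal (MvPolynomial (Fin n) K)} (hI : SStableIdeal I)
    (hdeg : ∀ u, MinGen I u → mdeg u = d) : SStableSet {u | MinGen I u} := by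
  intro u p q hpq hu
  have h := hI.2 _ q (by simp) hu.1 p hpq
  rw [add_tsub_cancel_right] at h
  obtain ⟨v, hv, hvu⟩ := exists_minGen_le h
  have hu' := hdeg _ hu
  have hv' := hdeg _ hv
  rw [mdeg_add, mdeg_single] at hu'
  rwa [eq_of_le_of_mdeg_le hvu (by rw [mdeg_add, mdeg_single]; omega)] at hv

end MonomialSpan

/-- characterization of `ℓ`-sequences of nonzero strongly stable ideals
generated in degree `d`: exactly the M-vectors with `ℓ_2 ≤ d`. -/
theorem stmt9 (n d : ℕ) (hn : 0 < n) (hd : 0 < d) (K : Type) [Field K]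
    (ℓ : Fin n → ℕ) :
    (∃ (I : Ideal (MvPolynomial (Fin n) K)) (G : Finset (Mono n)),
        I ≠ ⊥ ∧ SStableIdeal I ∧ (∀ u, u ∈ G ↔ MinGen I u) ∧
        (∀ u ∈ G, mdeg u = d) ∧
        ∀ k : Fin n, (G.filter fun u => maxVar u = (k : ℕ) + 1).card = ℓ k) ↔
    (MVector ℓ ∧ ∀ h2 : 1 < n, ℓ ⟨1, h2⟩ ≤ d) := by
  constructor
  · rintro ⟨I, G, hI0, hI, hG, hdeg, hℓ⟩
    refine SStableSet.mVector hn hd ?_ hdeg ?_ hℓ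
    · obtain ⟨p, hp, hp0⟩ := Submodule.exists_mem_ne_zero_of_ne_bot hI0
      obtain ⟨m, hm⟩ := support_nonempty.mpr hp0
      obtain ⟨v, hv, -⟩ := exists_minGen_le (hI.1 p hp m hm)
      exact ⟨v, (hG v).mpr hv⟩
    · rw [show (G : Set (Mono n)) = {u | MinGen I u} from Set.ext hG]
      exact hI.sstableSet fun u hu => hdeg u ((hG u).mpr hu)
  · rintro ⟨hℓ, hℓ1⟩
    have hdeg : ∀ u ∈ lexRankSet d ℓ, mdeg u = d := fun u hu => (mem_lexRankSet.mp hu).1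
    have hcard := fun k => card_lexRankSet hd k (hℓ.le_choose hd hℓ1 k)
    refine ⟨Ideal.span ((fun v => monomial v (1 : K)) '' (lexRankSet d ℓ : Set (Mono n))),
      lexRankSet d ℓ, ?_, sstableIdeal_span (sstableSet_lexRankSet hℓ),
      fun u => (minGen_span_iff hdeg).symm, hdeg, hcard⟩
    obtain ⟨u, hu⟩ : (lexRankSet d ℓ).Nonempty := by
      have := hcard ⟨0, hn⟩
      rw [hℓ.1] at this
      obtain ⟨u, hu⟩ := Finset.card_pos.mp (this.trans_gt one_pos)
      exact ⟨u, (Finset.mem_filter.mp hu).1⟩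
    refine (Submodule.ne_bot_iff _).mpr ⟨monomial u 1, monomial_mem_span_iff.mpr
      ⟨u, hu, le_rfl⟩, ?_⟩
    rw [Ne, monomial_eq_zero]
    exact one_ne_zero

end Paper
end

section
/- Let Γ be an (n-2)-dimensional simplicial complex on the vertex set [n+d-1] and Γ* its Alexander dual. Then Γ is Cohen–Macaulay and shifted if and only if the Stanley–Reisner ideal I_{Γ*} is a squarefree strongly stable ideal generated in degree d. Moreover, in that case the ℓ*-sequence of I_{Γ*} equals the h-vector of Γ: ℓ*_k(I_{Γ*}) = h_{k-1}(Γ) for k = 1,...,n. -/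
set_option synthInstance.maxHeartbeats 1000000
set_option maxHeartbeats 1000000

open MvPolynomial

namespace Paper

/-! ### Ideal-level notions -/

variable {n : ℕ} {K : Type} [Field K]

/-- squarefree exponent vector -/
def SqFree {n : ℕ} (u : Mono n) : Prop := ∀ i, u i ≤ 1

/-- squarefree monomial ideal -/
def SqMonomialIdeal (I : Ideal (MvPolynomial (Fin n) K)) : Prop :=
  MonomialIdeal I ∧ ∀ u : Mono n, MinGen I u → SqFree u

/-- squarefree strongly stable ideal -/
def SqSStableIdeal (I : Ideal (MvPolynomial (Fin n) K)) : Prop :=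
  SqMonomialIdeal I ∧
  ∀ u : Mono n, SqFree u → monomial u (1 : K) ∈ I →
    ∀ p q : Fin n, p < q → u q = 1 → u p = 0 →
      monomial (u - Finsupp.single q 1 + Finsupp.single p 1) (1 : K) ∈ I

/-! ### Simplicial complexes -/

/-- `Γ` is a simplicial complex on the vertex set `Fin m` (given as its finset of faces). -/
def IsComplex {m : ℕ} (Γ : Finset (Finset (Fin m))) : Prop :=
  ∀ F ∈ Γ, ∀ G ⊆ F, G ∈ Γ

/-- the Alexander dual `Γ* = {F : Fᶜ ∉ Γ}` -/
def alexDual {m : ℕ} (Γ : Finset (Finset (Fin m))) : Finset (Finset (Fin m)) :=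
  Finset.univ.filter fun F => Fᶜ ∉ Γ

/-- squarefree exponent vector of a subset -/
noncomputable def expOf {m : ℕ} (F : Finset (Fin m)) : Mono m := ∑ i ∈ F, Finsupp.single i 1

/-- the Stanley–Reisner ideal of `Γ` -/
noncomputable def srIdeal (K : Type) [Field K] {m : ℕ} (Γ : Finset (Finset (Fin m))) :
    Ideal (MvPolynomial (Fin m) K) :=
  Ideal.span ((fun F : Finset (Fin m) => monomial (expOf F) (1 : K)) '' {F | F ∉ Γ})

/-- `Γ` is shifted -/
def Shifted {m : ℕ} (Γ : Finset (Finset (Fin m))) : Prop :=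
  ∀ F ∈ Γ, ∀ j ∈ F, ∀ i : Fin m, j < i → i ∉ F → insert i (F.erase j) ∈ Γ

/-- number of faces of `Γ` of cardinality `k` (that is, `f_{k-1}(Γ)`) -/
def fNum {m : ℕ} (Γ : Finset (Finset (Fin m))) (k : ℕ) : ℕ :=
  (Γ.filter fun F => F.card = k).card

/-- the `h`-vector of a `(D-1)`-dimensional complex:
`hNum Γ D k = h_k(Γ) = Σ_{i=0}^{k} (-1)^{k-i} C(D-i, k-i) f_{i-1}(Γ)` -/
def hNum {m : ℕ} (Γ : Finset (Finset (Fin m))) (D k : ℕ) : ℤ :=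
  ∑ i ∈ Finset.range (k + 1),
    (-1 : ℤ) ^ (k - i) * (Nat.choose (D - i) (k - i) : ℤ) * (fNum Γ i : ℤ)

/-- `S/I` is Cohen–Macaulay: there is a regular sequence on `S/I` consisting of elements of
the graded maximal ideal whose length equals the Krull dimension of `S/I`. -/
def IsCM (K : Type) [Field K] {m : ℕ} (I : Ideal (MvPolynomial (Fin m) K)) : Prop :=
  ∃ rs : List (MvPolynomial (Fin m) K),
    (∀ r ∈ rs, constantCoeff r = 0) ∧
    RingTheory.Sequence.IsRegular (MvPolynomial (Fin m) K ⧸ I)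
      (rs.map (Ideal.Quotient.mk I)) ∧
    (rs.length : WithBot (WithTop ℕ)) = ringKrullDim (MvPolynomial (Fin m) K ⧸ I)

/-! ### Weakly regular sequences and associated primes -/

section Regular

open RingTheory.Sequence
open scoped Pointwise

lemma isWeaklyRegular_of_exact {R : Type*} [CommRing R] {M₁ M₂ M₃ : Type*}
    [AddCommGroup M₁] [AddCommGroup M₂] [AddCommGroup M₃] [Module R M₁] [Module R M₂] [Module R M₃]
    {rs : List R} {f : M₁ →ₗ[R] M₂} {g : M₂ →ₗ[R] M₃} (hf : Function.Injective f)
    (hfg : Function.Exact f g) (hg : Function.Surjective g)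
    (h₁ : IsWeaklyRegular M₁ rs) (h₃ : IsWeaklyRegular M₃ rs) : IsWeaklyRegular M₂ rs := by
  induction h₁ generalizing M₂ M₃ with
  | nil => simp
  | @cons M₁ _ _ r rs h₁ _ ih =>
    rw [isWeaklyRegular_cons_iff] at h₃ ⊢
    refine ⟨isSMulRegular_of_range_eq_ker hf hfg.linearMap_ker_eq.symm h₁ h₃.1,
      ih ?_ (QuotSMulTop.map_exact r hfg hg) (QuotSMulTop.map_surjective r hg) h₃.2⟩
    have h0 : Function.Exact (0 : Unit →ₗ[R] M₁) f := by
      intro x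
      rw [map_eq_zero_iff f hf]
      simp [eq_comm]
    have := QuotSMulTop.map_first_exact_on_four_term_exact_of_isSMulRegular_last h0 hfg h₃.1
    rw [injective_iff_map_eq_zero]
    intro x hx
    obtain ⟨y, rfl⟩ := (this x).1 hx
    simp

/-- Weak regularity on `R ⧸ J` follows from that on `R ⧸ (J : a)` and on `R ⧸ (J + (a))`. -/
lemma isWeaklyRegular_quotient_of_colon {R : Type*} [CommRing R] {rs : List R}
    {J J₁ J₂ : Ideal R} (a : R) (h₁ : ∀ p, p ∈ J₁ ↔ a * p ∈ J) (h₂ : J₂ = J ⊔ Ideal.span {a})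
    (hr₁ : IsWeaklyRegular (R ⧸ J₁) rs) (hr₂ : IsWeaklyRegular (R ⧸ J₂) rs) :
    IsWeaklyRegular (R ⧸ J) rs := by
  have hle : J₁ ≤ Submodule.comap (LinearMap.mulLeft R a) J := fun p hp => (h₁ p).1 hp
  refine isWeaklyRegular_of_exact
    (f := Submodule.mapQ J₁ J (LinearMap.mulLeft R a) hle)
    (g := Submodule.mapQ J J₂ LinearMap.id (by rw [h₂]; exact le_sup_left)) ?_ ?_ ?_ hr₁ hr₂
  · rw [injective_iff_map_eq_zero]
    intro x hx
    obtain ⟨p, rfl⟩ := Submodule.Quotient.mk_surjective _ x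
    rw [Submodule.mapQ_apply, Submodule.Quotient.mk_eq_zero] at hx
    exact (Submodule.Quotient.mk_eq_zero _).2 ((h₁ p).2 hx)
  · intro x
    obtain ⟨p, rfl⟩ := Submodule.Quotient.mk_surjective _ x
    rw [Submodule.mapQ_apply, Submodule.Quotient.mk_eq_zero, h₂]
    constructor
    · intro hp
      obtain ⟨q, hq, s, hs, rfl⟩ := Submodule.mem_sup.1 hp
      obtain ⟨t, rfl⟩ := Ideal.mem_span_singleton'.1 hs
      refine ⟨Submodule.Quotient.mk t, ?_⟩
      rw [Submodule.mapQ_apply]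
      refine (Submodule.Quotient.eq _).2 ?_
      have : LinearMap.mulLeft R a t - (q + t * a) = -q := by simp; ring
      rw [LinearMap.mulLeft_apply] at this ⊢
      simpa [this] using hq
    · rintro ⟨y, hy⟩
      obtain ⟨t, rfl⟩ := Submodule.Quotient.mk_surjective _ y
      rw [Submodule.mapQ_apply] at hy
      have h := (Submodule.Quotient.eq _).1 hy
      refine Submodule.mem_sup.2 ⟨-(LinearMap.mulLeft R a t - p), neg_mem h, a * t,
        Ideal.mul_mem_right _ _ (Ideal.mem_span_singleton_self a), ?_⟩
      simp
  · intro x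
    obtain ⟨p, rfl⟩ := Submodule.Quotient.mk_surjective _ x
    exact ⟨Submodule.Quotient.mk p, rfl⟩

lemma isWeaklyRegular_quotient_cons {R : Type*} [CommRing R] {r : R} {rs : List R}
    {J J' : Ideal R} (h : ∀ p, r * p ∈ J → p ∈ J) (hJ : J' = J ⊔ Ideal.span {r})
    (hrs : IsWeaklyRegular (R ⧸ J') rs) : IsWeaklyRegular (R ⧸ J) (r :: rs) := by
  rw [isWeaklyRegular_cons_iff]
  refine ⟨(isSMulRegular_quotient_iff_mem_of_smul_mem _ _).2 h, ?_⟩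
  have e1 : r • (⊤ : Submodule R (R ⧸ J)) = Submodule.map J.mkQ J' := by
    rw [hJ, Submodule.map_sup, Submodule.mkQ_map_self, bot_sup_eq, ← Submodule.range_mkQ J,
      LinearMap.range_eq_map, ← Submodule.map_pointwise_smul, ← Submodule.ideal_span_singleton_smul]
    simp
  have e := (Submodule.quotEquivOfEq _ _ e1).trans
    (Submodule.quotientQuotientEquivQuotient J J' (by rw [hJ]; exact le_sup_left))
  exact (e.isWeaklyRegular_congr rs).2 hrs

/-- An associated prime of `M` contained in `m` is strictly contained in some associated
prime of `M/xM` contained in `m`, for every `M`-regular `x ∈ m`. -/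
lemma exists_associatedPrimes_quotSMulTop {R : Type*} [CommRing R] [IsNoetherianRing R]
    {M : Type*} [AddCommGroup M] [Module R M] [Module.Finite R M] {m P : Ideal R} [m.IsPrime]
    (hP : P ∈ associatedPrimes R M) (hPm : P ≤ m) {x : R} (hx : x ∈ m) (hreg : IsSMulRegular M x) :
    ∃ Q ∈ associatedPrimes R (QuotSMulTop x M), P ≤ Q ∧ Q ≤ m ∧ x ∈ Q := by
  obtain ⟨hPp, y, hy⟩ := isAssociatedPrime_iff.1 hP
  let N : Submodule R M := Submodule.torsionBySet R M P
  have hyN : y ∈ N := by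
    rw [Submodule.mem_torsionBySet_iff]
    rintro ⟨a, ha⟩
    have ha' : a ∈ P := ha
    rw [hy, Submodule.mem_colon_singleton] at ha'
    simpa using ha'
  have hsupp : (⟨m, inferInstance⟩ : PrimeSpectrum R) ∈ Module.support R (QuotSMulTop x N) := by
    rw [Module.support_quotSMulTop]
    refine ⟨?_, by simpa using hx⟩
    rw [Module.mem_support_iff']
    refine ⟨⟨y, hyN⟩, fun r hr h => hr (hPm ?_)⟩
    rw [hy, Submodule.mem_colon_singleton]
    simpa using congrArg Subtype.val h
  rw [Module.mem_support_iff_of_finite] at hsupp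
  obtain ⟨Q, hQ, hQm⟩ := Ideal.exists_minimalPrimes_le hsupp
  have hann : Module.annihilator R (QuotSMulTop x N) ≤ Q := hQ.1.2
  have hinj : Function.Injective (QuotSMulTop.map x N.subtype) := by
    rw [injective_iff_map_eq_zero]
    intro z hz
    obtain ⟨w, rfl⟩ := Submodule.Quotient.mk_surjective _ z
    rw [QuotSMulTop.map_apply_mk, Submodule.Quotient.mk_eq_zero,
      Submodule.mem_smul_pointwise_iff_exists] at hz
    obtain ⟨v, -, hv⟩ := hz
    have hvN : v ∈ N := by
      rw [Submodule.mem_torsionBySet_iff]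
      rintro ⟨a, ha⟩
      refine hreg ?_
      have := (Submodule.mem_torsionBySet_iff _ _).1 w.2 ⟨a, ha⟩
      simp only [Submodule.subtype_apply] at hv this ⊢
      rw [← hv] at this
      change x • a • v = x • 0
      rw [smul_comm, smul_zero]
      exact this
    rw [Submodule.Quotient.mk_eq_zero, Submodule.mem_smul_pointwise_iff_exists]
    exact ⟨⟨v, hvN⟩, trivial, Subtype.ext hv⟩
  refine ⟨Q, associatedPrimes.subset_of_injective hinj
    (Module.associatedPrimes.minimalPrimes_annihilator_subset_associatedPrimes R _ hQ), ?_, hQm, hann ?_⟩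
  · refine le_trans ?_ hann
    intro a ha
    rw [Module.mem_annihilator]
    intro z
    obtain ⟨w, rfl⟩ := Submodule.Quotient.mk_surjective _ z
    rw [← Submodule.Quotient.mk_smul]
    have : a • w = 0 := Subtype.ext ((Submodule.mem_torsionBySet_iff _ _).1 w.2 ⟨a, ha⟩)
    rw [this, Submodule.Quotient.mk_zero]
  · rw [Module.mem_annihilator]
    intro z
    obtain ⟨w, rfl⟩ := Submodule.Quotient.mk_surjective _ z
    rw [← Submodule.Quotient.mk_smul, Submodule.Quotient.mk_eq_zero]
    exact Submodule.smul_mem_pointwise_smul _ _ _ trivial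

lemma length_le_ringKrullDim_of_associatedPrimes {R : Type*} [CommRing R] [IsNoetherianRing R]
    {M : Type*} [AddCommGroup M] [Module R M] [Module.Finite R M] {m P : Ideal R} [m.IsPrime]
    (hP : P ∈ associatedPrimes R M) (hPm : P ≤ m) {rs : List R} (hrs : ∀ r ∈ rs, r ∈ m)
    (hreg : IsWeaklyRegular M rs) : (rs.length : WithBot ℕ∞) ≤ ringKrullDim (R ⧸ P) := by
  induction rs generalizing M P with
  | nil =>
    have := Ideal.Quotient.nontrivial_iff.2 (IsAssociatedPrime.isPrime hP).ne_top
    simpa using ringKrullDim_nonneg_of_nontrivial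
  | cons x rs ih =>
    rw [isWeaklyRegular_cons_iff] at hreg
    obtain ⟨Q, hQ, hPQ, hQm, hxQ⟩ := exists_associatedPrimes_quotSMulTop hP hPm
      (hrs x List.mem_cons_self) hreg.1
    have h1 := ih hQ hQm (fun r hr => hrs r (List.mem_cons_of_mem _ hr)) hreg.2
    have : P.IsPrime := IsAssociatedPrime.isPrime hP
    have hxP : x ∉ P := by
      obtain ⟨-, y, hy⟩ := isAssociatedPrime_iff.1 hP
      intro hx
      rw [hy, Submodule.mem_colon_singleton] at hx
      have hy0 : y = 0 := hreg.1 (by simpa using hx)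
      apply this.ne_top
      rw [hy, hy0, Ideal.eq_top_iff_one, Submodule.mem_colon_singleton]
      simp
    have h2 := ringKrullDim_succ_le_of_surjective (Ideal.Quotient.factor hPQ)
      (Ideal.Quotient.factor_surjective hPQ) (r := Ideal.Quotient.mk P x)
      (mem_nonZeroDivisors_of_ne_zero (by rwa [Ne, Ideal.Quotient.eq_zero_iff_mem]))
      (by simpa [Ideal.Quotient.eq_zero_iff_mem] using hxQ)
    refine le_trans ?_ h2
    push_cast [List.length_cons]
    gcongr

end Regular

/-! ### Stanley–Reisner ideals -/

section StanleyReisner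

open RingTheory.Sequence

variable {m : ℕ} {Γ : Finset (Finset (Fin m))}

lemma expOf_apply (F : Finset (Fin m)) (i : Fin m) : expOf F i = if i ∈ F then 1 else 0 := by
  simp [expOf, Finsupp.finsetSum_apply, Finsupp.single_apply]

lemma support_expOf (F : Finset (Fin m)) : (expOf F).support = F := by
  ext i
  simp [expOf_apply]

lemma expOf_le_iff {F : Finset (Fin m)} {u : Mono m} : expOf F ≤ u ↔ F ⊆ u.support := by
  simp only [Finsupp.le_def, expOf_apply, Finset.subset_iff, Finsupp.mem_support_iff]
  refine forall_congr' fun i => ?_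
  split_ifs with h <;> simp [h, Nat.one_le_iff_ne_zero]

lemma monomial_expOf (F : Finset (Fin m)) : monomial (expOf F) (1 : K) = ∏ i ∈ F, X i := by
  simp only [expOf, X, monomial_sum_one]

lemma mem_srIdeal (hΓ : IsComplex Γ) {p : MvPolynomial (Fin m) K} :
    p ∈ srIdeal K Γ ↔ ∀ u, coeff u p ≠ 0 → u.support ∉ Γ := by
  rw [srIdeal, ← Set.image_image (fun u => monomial u (1 : K)) expOf, mem_ideal_span_monomial_image]
  refine forall_congr' fun u => ?_
  rw [mem_support_iff]
  refine imp_congr_right fun _ => ⟨?_, fun h => ⟨_, ⟨_, h, rfl⟩, expOf_le_iff.2 subset_rfl⟩⟩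
  rintro ⟨_, ⟨F, hF, rfl⟩, h⟩ h'
  exact hF (hΓ _ h' _ (expOf_le_iff.1 h))

lemma monomial_mem_srIdeal (hΓ : IsComplex Γ) {u : Mono m} :
    monomial u (1 : K) ∈ srIdeal K Γ ↔ u.support ∉ Γ := by
  classical
  rw [mem_srIdeal hΓ]
  simp [coeff_monomial]

lemma mul_monomial_mem_srIdeal (hΓ : IsComplex Γ) (G : Finset (Fin m))
    {Γ' : Finset (Finset (Fin m))} (hΓ' : ∀ F, F ∈ Γ' ↔ F ∪ G ∈ Γ)
    (p : MvPolynomial (Fin m) K) :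
    p ∈ srIdeal K Γ' ↔ monomial (expOf G) 1 * p ∈ srIdeal K Γ := by
  have hc : IsComplex Γ' := fun F hF H hH =>
    (hΓ' H).2 (hΓ _ ((hΓ' F).1 hF) _ (Finset.union_subset_union_left hH))
  have hs : ∀ u : Mono m, (expOf G + u).support = u.support ∪ G := fun u => by
    ext i
    simp only [Finsupp.mem_support_iff, Finsupp.add_apply, Finset.mem_union, expOf_apply]
    split_ifs with h <;> simp [h]
  rw [mem_srIdeal hc, mem_srIdeal hΓ]
  constructor
  · intro h u hu
    rw [coeff_monomial_mul'] at hu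
    split_ifs at hu with hle
    · obtain ⟨v, rfl⟩ := exists_add_of_le hle
      rw [hs, ← hΓ']
      refine h v ?_
      simpa using hu
    · exact absurd rfl hu
  · intro h u hu
    rw [hΓ', ← hs]
    exact h _ (by simpa [coeff_monomial_mul] using hu)

lemma isComplex_filter_not_subset (hΓ : IsComplex Γ) (G : Finset (Fin m)) :
    IsComplex (Γ.filter fun F => ¬ G ⊆ F) := by
  intro F hF H hH
  rw [Finset.mem_filter] at hF ⊢
  exact ⟨hΓ F hF.1 H hH, fun h => hF.2 (h.trans hH)⟩

lemma isComplex_powerset (F : Finset (Fin m)) : IsComplex F.powerset := by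
  intro G hG H hH
  rw [Finset.mem_powerset] at hG ⊢
  exact hH.trans hG

lemma srIdeal_filter_not_subset (hΓ : IsComplex Γ) (G : Finset (Fin m)) :
    srIdeal K (Γ.filter fun F => ¬ G ⊆ F) =
      srIdeal K Γ ⊔ Ideal.span {monomial (expOf G) (1 : K)} := by
  apply le_antisymm
  · rw [srIdeal, Ideal.span_le]
    rintro _ ⟨F, hF, rfl⟩
    by_cases hF' : F ∈ Γ
    · have hG : G ⊆ F := by
        by_contra h
        exact hF (Finset.mem_filter.2 ⟨hF', h⟩)
      refine Ideal.mem_sup_right (Ideal.mem_span_singleton.2 ?_)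
      rw [monomial_dvd_monomial]
      exact ⟨Or.inr (expOf_le_iff.2 (by rwa [support_expOf])), one_dvd _⟩
    · exact Ideal.mem_sup_left (Ideal.subset_span ⟨F, hF', rfl⟩)
  · refine sup_le (Ideal.span_mono (Set.image_mono fun F hF h => ?_)) ?_
    · exact hF (Finset.mem_filter.1 h).1
    · rw [Ideal.span_le, Set.singleton_subset_iff, SetLike.mem_coe,
        monomial_mem_srIdeal (isComplex_filter_not_subset hΓ G), support_expOf]
      simp

lemma isWeaklyRegular_empty (rs : List (MvPolynomial (Fin m) K)) :
    IsWeaklyRegular (MvPolynomial (Fin m) K ⧸ srIdeal K (∅ : Finset (Finset (Fin m)))) rs := by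
  have h : srIdeal K (∅ : Finset (Finset (Fin m))) = ⊤ := by
    rw [Ideal.eq_top_iff_one]
    refine Ideal.subset_span ⟨∅, by simp, ?_⟩
    simp [monomial_expOf]
  have : Subsingleton (MvPolynomial (Fin m) K ⧸ srIdeal K (∅ : Finset (Finset (Fin m)))) :=
    Ideal.Quotient.subsingleton_iff.2 h
  rw [isWeaklyRegular_iff]
  intro i hi x y _
  obtain ⟨x, rfl⟩ := Submodule.Quotient.mk_surjective _ x
  obtain ⟨y, rfl⟩ := Submodule.Quotient.mk_surjective _ y
  rw [Subsingleton.elim x y]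

/-- Weak regularity on a Stanley–Reisner ring follows from that on the star and the deletion
of a vertex. -/
lemma isWeaklyRegular_of_star_of_deletion (hΓ : IsComplex Γ)
    {rs : List (MvPolynomial (Fin m) K)} (v : Fin m) {Γ₁ Γ₂ : Finset (Finset (Fin m))}
    (h₁ : ∀ F, F ∈ Γ₁ ↔ insert v F ∈ Γ) (h₂ : ∀ F, F ∈ Γ₂ ↔ F ∈ Γ ∧ v ∉ F)
    (hr₁ : IsWeaklyRegular (MvPolynomial (Fin m) K ⧸ srIdeal K Γ₁) rs)
    (hr₂ : IsWeaklyRegular (MvPolynomial (Fin m) K ⧸ srIdeal K Γ₂) rs) :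
    IsWeaklyRegular (MvPolynomial (Fin m) K ⧸ srIdeal K Γ) rs := by
  have e : Γ₂ = Γ.filter fun F => ¬ {v} ⊆ F := by
    ext F
    simp [h₂]
  refine isWeaklyRegular_quotient_of_colon (monomial (expOf {v}) (1 : K))
    (mul_monomial_mem_srIdeal hΓ {v} fun F => ?_)
    (by rw [e, srIdeal_filter_not_subset hΓ]) hr₁ hr₂
  rw [h₁, Finset.insert_eq, Finset.union_comm]

lemma isWeaklyRegular_powerset_filter {rs : List (MvPolynomial (Fin m) K)} {F : Finset (Fin m)}
    (h : ∀ i ∈ F, IsWeaklyRegular (MvPolynomial (Fin m) K ⧸ srIdeal K (F.erase i).powerset) rs)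
    {G : Finset (Fin m)} (hG : G ⊆ F) :
    IsWeaklyRegular
      (MvPolynomial (Fin m) K ⧸ srIdeal K (F.powerset.filter fun H => ¬ G ⊆ H)) rs := by
  induction G using Finset.induction_on with
  | empty =>
    rw [Finset.filter_false_of_mem (by simp)]
    exact isWeaklyRegular_empty rs
  | insert i G hi ih =>
    rw [Finset.insert_subset_iff] at hG
    refine isWeaklyRegular_of_star_of_deletion
      (isComplex_filter_not_subset (isComplex_powerset F) _) i (fun H => ?_) (fun H => ?_)
      (ih hG.2) (h i hG.1)
    · simp only [Finset.mem_filter, Finset.mem_powerset, Finset.insert_subset_iff, hG.1, true_and,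
        Finset.mem_insert_self, Finset.subset_insert_iff_of_notMem hi]
    · simp only [Finset.mem_filter, Finset.mem_powerset, Finset.insert_subset_iff,
        Finset.subset_erase]
      tauto

variable (K) in
/-- The elementary symmetric polynomials of degrees `k, k - 1, …, 1`. -/
noncomputable def esymmList (m : ℕ) : ℕ → List (MvPolynomial (Fin m) K)
  | 0 => []
  | k + 1 => esymm (Fin m) K (k + 1) :: esymmList m k

lemma length_esymmList (m k : ℕ) : (esymmList K m k).length = k := by
  induction k with
  | zero => rfl
  | succ k ih => simp [esymmList, ih]

lemma constantCoeff_of_mem_esymmList {k : ℕ} {r : MvPolynomial (Fin m) K}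
    (hr : r ∈ esymmList K m k) : constantCoeff r = 0 := by
  induction k with
  | zero => simp [esymmList] at hr
  | succ k ih =>
    rw [esymmList, List.mem_cons] at hr
    rcases hr with rfl | hr
    · rw [esymm, map_sum]
      refine Finset.sum_eq_zero fun t ht => ?_
      have : t.Nonempty := Finset.card_pos.1 (by simp [(Finset.mem_powersetCard.1 ht).2])
      obtain ⟨i, hi⟩ := this
      rw [map_prod]
      exact Finset.prod_eq_zero hi (by simp)
    · exact ih hr

lemma isWeaklyRegular_esymmList_powerset {k : ℕ} {F : Finset (Fin m)} (hF : F.card = k) :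
    IsWeaklyRegular (MvPolynomial (Fin m) K ⧸ srIdeal K F.powerset) (esymmList K m k) := by
  induction k generalizing F with
  | zero => simp [esymmList]
  | succ k ih =>
    have hmem : esymm (Fin m) K (k + 1) - monomial (expOf F) 1 ∈ srIdeal K F.powerset := by
      rw [esymm, ← Finset.add_sum_erase _ _ (Finset.mem_powersetCard.2 ⟨F.subset_univ, hF⟩),
        monomial_expOf, add_sub_cancel_left]
      refine Ideal.sum_mem _ fun t ht => ?_
      rw [← monomial_expOf, monomial_mem_srIdeal (isComplex_powerset F), support_expOf,
        Finset.mem_powerset]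
      rw [Finset.mem_erase, Finset.mem_powersetCard] at ht
      intro h
      exact ht.1 (Finset.eq_of_subset_of_card_le h (by rw [hF, ht.2.2]))
    refine isWeaklyRegular_quotient_cons (J' := srIdeal K (F.powerset.filter fun H => ¬ F ⊆ H))
      (fun p hp => ?_) ?_ (isWeaklyRegular_powerset_filter (fun i hi => ih ?_) subset_rfl)
    · rw [mul_monomial_mem_srIdeal (isComplex_powerset F) F (Γ' := F.powerset)
        (fun H => by simp [Finset.union_subset_iff])]
      have := sub_mem hp (Ideal.mul_mem_right p _ hmem)
      rwa [← sub_mul, sub_sub_cancel] at this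
    · rw [srIdeal_filter_not_subset (isComplex_powerset F)]
      apply le_antisymm <;> refine sup_le le_sup_left ?_ <;>
        rw [Ideal.span_le, Set.singleton_subset_iff, SetLike.mem_coe]
      · have := sub_mem (Ideal.mem_sup_right (S := srIdeal K F.powerset)
          (Ideal.mem_span_singleton_self (esymm (Fin m) K (k + 1)))) (Ideal.mem_sup_left hmem)
        rwa [sub_sub_cancel] at this
      · have := add_mem (Ideal.mem_sup_right (S := srIdeal K F.powerset)
          (Ideal.mem_span_singleton_self (monomial (expOf F) (1 : K)))) (Ideal.mem_sup_left hmem)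
        rwa [add_sub_cancel] at this
    · rw [Finset.card_erase_of_mem hi, hF, Nat.add_sub_cancel]

lemma isWeaklyRegular_of_shifted_from {k : ℕ} {rs : List (MvPolynomial (Fin m) K)}
    (hrs : ∀ F : Finset (Fin m), F.card = k →
      IsWeaklyRegular (MvPolynomial (Fin m) K ⧸ srIdeal K F.powerset) rs)
    {s t : ℕ} (hst : s + t = m) (hΓ : IsComplex Γ) (hle : ∀ F ∈ Γ, F.card ≤ k)
    (hpure : ∀ F ∈ Γ, ∃ G ∈ Γ, F ⊆ G ∧ G.card = k)
    (hcone : ∀ v : Fin m, v.1 < t → (∀ F ∈ Γ, insert v F ∈ Γ) ∨ {v} ∉ Γ)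
    (hshift : ∀ F ∈ Γ, ∀ j ∈ F, t ≤ j.1 → ∀ i, j < i → i ∉ F → insert i (F.erase j) ∈ Γ) :
    IsWeaklyRegular (MvPolynomial (Fin m) K ⧸ srIdeal K Γ) rs := by
  induction s generalizing t Γ with
  | zero =>
    rcases Γ.eq_empty_or_nonempty with rfl | ⟨F₀, hF₀⟩
    · exact isWeaklyRegular_empty rs
    obtain ⟨F, hF, -, hFk⟩ := hpure F₀ hF₀
    have : Γ = F.powerset := by
      ext H
      rw [Finset.mem_powerset]
      refine ⟨fun hH v hv => ?_, fun h => hΓ F hF H h⟩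
      rcases hcone v (by omega) with h | h
      · by_contra hvF
        have := hle _ (h F hF)
        rw [Finset.card_insert_of_notMem hvF] at this
        omega
      · exact absurd (hΓ H hH _ (Finset.singleton_subset_iff.2 hv)) h
    rw [this]
    exact hrs F hFk
  | succ s ih =>
    set v : Fin m := ⟨t, by omega⟩ with hv
    have hlt : ∀ w : Fin m, w.1 < t + 1 → w.1 < t ∨ w = v := fun w hw => by
      rw [hv, Fin.ext_iff]
      change w.1 < t ∨ w.1 = t
      omega
    by_cases hvc : (∀ F ∈ Γ, insert v F ∈ Γ) ∨ {v} ∉ Γ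
    · refine ih (by omega) hΓ hle hpure (fun w hw => ?_)
        (fun F hF j hj htj => hshift F hF j hj (Nat.le_of_succ_le htj))
      rcases hlt w hw with h | rfl
      · exact hcone w h
      · exact hvc
    push Not at hvc
    obtain ⟨⟨F₀, hF₀, hvF₀⟩, hvΓ⟩ := hvc
    refine isWeaklyRegular_of_star_of_deletion hΓ v
      (Γ₁ := Finset.univ.filter fun F => insert v F ∈ Γ) (Γ₂ := Γ.filter fun F => v ∉ F)
      (by simp) (by simp) (ih (t := t + 1) (by omega) ?_ ?_ ?_ ?_ ?_)
      (ih (t := t + 1) (by omega) ?_ ?_ ?_ ?_ ?_) <;>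
      simp only [IsComplex, Finset.mem_filter, Finset.mem_univ, true_and]
    · exact fun F hF G hG => hΓ _ hF _ (Finset.insert_subset_insert _ hG)
    · exact fun F hF => (Finset.card_le_card (Finset.subset_insert _ _)).trans (hle _ hF)
    · intro F hF
      obtain ⟨G, hG, hFG, hGk⟩ := hpure _ hF
      rw [Finset.insert_subset_iff] at hFG
      exact ⟨G, by rwa [Finset.insert_eq_of_mem hFG.1], hFG.2, hGk⟩
    · intro w hw
      rcases hlt w hw with h | rfl
      · rcases hcone w h with h | h
        · left
          intro F hF
          rw [Finset.insert_comm]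
          exact h _ hF
        · exact Or.inr fun h' => h (hΓ _ h' _ (Finset.subset_insert _ _))
      · left
        intro F hF
        rwa [Finset.insert_idem]
    · intro F hF j hj htj i hji hi
      have hvj : v < j := Fin.lt_def.2 htj
      have h := hshift _ hF j (Finset.mem_insert_of_mem hj) (by omega) i hji
        (by simp [hi, (hvj.trans hji).ne'])
      rwa [Finset.erase_insert_of_ne hvj.ne, Finset.insert_comm] at h
    · exact fun F hF G hG => ⟨hΓ F hF.1 G hG, fun h => hF.2 (hG h)⟩
    · exact fun F hF => hle F hF.1
    · rintro F ⟨hF, hvF⟩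
      obtain ⟨G, hG, hFG, hGk⟩ := hpure F hF
      by_cases hvG : v ∈ G
      · obtain ⟨i, hvi, hiG⟩ : ∃ i, v < i ∧ i ∉ G := by
          by_contra! hcon
          refine hvF₀ (hΓ G hG _ (Finset.insert_subset hvG fun w hw => ?_))
          rcases lt_trichotomy w v with h | rfl | h
          · rcases hcone w (Fin.lt_def.1 h) with h' | h'
            · by_contra hwG
              have := hle _ (h' G hG)
              rw [Finset.card_insert_of_notMem hwG] at this
              omega
            · exact absurd (hΓ F₀ hF₀ _ (Finset.singleton_subset_iff.2 hw)) h'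
          · exact hvG
          · exact hcon w h
        refine ⟨insert i (G.erase v), ⟨hshift G hG v hvG le_rfl i hvi hiG, by simp [hvi.ne]⟩,
          (Finset.subset_erase.2 ⟨hFG, hvF⟩).trans (Finset.subset_insert _ _), ?_⟩
        rw [Finset.card_insert_of_notMem (fun h => hiG (Finset.mem_of_mem_erase h)),
          Finset.card_erase_add_one hvG, hGk]
      · exact ⟨G, ⟨hG, hvG⟩, hFG, hGk⟩
    · intro w hw
      rcases hlt w hw with h | rfl
      · rcases hcone w h with h' | h'
        · left
          intro F hF
          refine ⟨h' F hF.1, fun hvF => ?_⟩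
          rcases Finset.mem_insert.1 hvF with h'' | h''
          · exact absurd (congrArg Fin.val h'') h.ne'
          · exact hF.2 h''
        · exact Or.inr fun h'' => h' h''.1
      · right
        simp
    · rintro F ⟨hF, hvF⟩ j hj htj i hji hi
      have hvj : v < j := Fin.lt_def.2 htj
      refine ⟨hshift F hF j hj (by omega) i hji hi, ?_⟩
      simp [hvF, (hvj.trans hji).ne]

end StanleyReisner

/-! ### Krull dimension and Cohen–Macaulayness of Stanley–Reisner rings -/

section CohenMacaulay

open RingTheory.Sequence

variable {m : ℕ} {Γ : Finset (Finset (Fin m))}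

variable (K) in
/-- Setting the variables outside `F` to zero. -/
noncomputable def restrictVars (F : Finset (Fin m)) :
    MvPolynomial (Fin m) K →ₐ[K] MvPolynomial F K :=
  aeval fun i => if h : i ∈ F then X ⟨i, h⟩ else 0

lemma restrictVars_rename (F : Finset (Fin m)) (q : MvPolynomial F K) :
    restrictVars K F (rename Subtype.val q) = q := by
  rw [restrictVars, aeval_rename]
  have : ((fun i => if h : i ∈ F then (X ⟨i, h⟩ : MvPolynomial F K) else 0) ∘
      (Subtype.val : F → Fin m)) = X := by
    ext1 i
    simp
  rw [this, aeval_X_left_apply]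

lemma restrictVars_surjective (F : Finset (Fin m)) : Function.Surjective (restrictVars K F) :=
  fun q => ⟨_, restrictVars_rename F q⟩

lemma srIdeal_le_ker_restrictVars (hΓ : IsComplex Γ) {F : Finset (Fin m)} (hF : F ∈ Γ) :
    srIdeal K Γ ≤ RingHom.ker (restrictVars K F) := by
  rw [srIdeal, Ideal.span_le]
  rintro _ ⟨G, hG, rfl⟩
  obtain ⟨i, hiG, hiF⟩ : ∃ i ∈ G, i ∉ F := by
    by_contra! h
    exact hG (hΓ F hF G h)
  change restrictVars K F (monomial (expOf G) 1) = 0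
  rw [monomial_expOf, map_prod]
  exact Finset.prod_eq_zero hiG (by simp [restrictVars, hiF])

lemma mk_rename_restrictVars (F : Finset (Fin m)) (p : MvPolynomial (Fin m) K) :
    Ideal.Quotient.mk (srIdeal K F.powerset) (rename Subtype.val (restrictVars K F p)) =
      Ideal.Quotient.mk (srIdeal K F.powerset) p := by
  have : ((Ideal.Quotient.mkₐ K (srIdeal K F.powerset)).comp (rename Subtype.val)).comp
      (restrictVars K F) = Ideal.Quotient.mkₐ K (srIdeal K F.powerset) := by
    apply algHom_ext
    intro i
    by_cases hi : i ∈ F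
    · simp [restrictVars, hi]
    · simp only [restrictVars, AlgHom.comp_apply, aeval_X, hi, dite_false, map_zero]
      symm
      refine Ideal.Quotient.eq_zero_iff_mem.2 (Ideal.subset_span ⟨{i}, by simpa using hi, ?_⟩)
      simp [monomial_expOf]
  exact DFunLike.congr_fun this p

lemma srIdeal_powerset_eq_ker (F : Finset (Fin m)) :
    srIdeal K F.powerset = RingHom.ker (restrictVars K F) := by
  refine le_antisymm (srIdeal_le_ker_restrictVars (isComplex_powerset F) (by simp)) fun p hp => ?_
  rw [RingHom.mem_ker] at hp
  rw [← Ideal.Quotient.eq_zero_iff_mem, ← mk_rename_restrictVars, hp, map_zero, map_zero]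

lemma card_le_ringKrullDim (hΓ : IsComplex Γ) {F : Finset (Fin m)} (hF : F ∈ Γ) :
    (F.card : WithBot ℕ∞) ≤ ringKrullDim (MvPolynomial (Fin m) K ⧸ srIdeal K Γ) := by
  have h := ringKrullDim_le_of_surjective
    (Ideal.Quotient.lift (srIdeal K Γ) (restrictVars K F).toRingHom
      fun p hp => srIdeal_le_ker_restrictVars hΓ hF hp)
    (Ideal.Quotient.lift_surjective_of_surjective _ _ (restrictVars_surjective F))
  simpa using h

lemma ringKrullDim_powerset_le (F : Finset (Fin m)) :
    ringKrullDim (MvPolynomial (Fin m) K ⧸ srIdeal K F.powerset) ≤ F.card := by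
  have h := ringKrullDim_le_of_surjective
    ((Ideal.Quotient.mk (srIdeal K F.powerset)).comp
      (rename Subtype.val : MvPolynomial F K →ₐ[K] _).toRingHom) (fun x => by
      obtain ⟨p, rfl⟩ := Ideal.Quotient.mk_surjective x
      exact ⟨_, mk_rename_restrictVars F p⟩)
  simpa using h

lemma ringKrullDim_srIdeal_le {k : ℕ} (hk : ∀ F ∈ Γ, F.card ≤ k) :
    ringKrullDim (MvPolynomial (Fin m) K ⧸ srIdeal K Γ) ≤ k := by
  rw [ringKrullDim_quotient, Order.krullDim]
  refine iSup_le fun p => ?_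
  classical
  set F : Finset (Fin m) := Finset.univ.filter fun i => X i ∉ p.head.1.asIdeal with hF
  have hFΓ : F ∈ Γ := by
    by_contra h
    have h1 : monomial (expOf F) (1 : K) ∈ p.head.1.asIdeal :=
      p.head.2 (Ideal.subset_span ⟨F, h, rfl⟩)
    rw [monomial_expOf] at h1
    obtain ⟨i, hi, hi'⟩ := (p.head.1.isPrime.prod_mem_iff).1 h1
    exact (Finset.mem_filter.1 hi).2 hi'
  have hle : srIdeal K F.powerset ≤ p.head.1.asIdeal := by
    rw [srIdeal, Ideal.span_le]
    rintro _ ⟨G, hG, rfl⟩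
    obtain ⟨i, hiG, hiF⟩ : ∃ i ∈ G, i ∉ F := by
      by_contra! h
      exact hG (Finset.mem_powerset.2 h)
    change monomial (expOf G) (1 : K) ∈ _
    rw [monomial_expOf, ← Finset.mul_prod_erase _ _ hiG]
    refine Ideal.mul_mem_right _ _ ?_
    simpa [hF] using hiF
  let q : LTSeries (PrimeSpectrum.zeroLocus (srIdeal K F.powerset : Set (MvPolynomial (Fin m) K))) :=
    { length := p.length
      toFun := fun i => ⟨(p i).1, hle.trans (p.monotone (Fin.zero_le i))⟩
      step := fun i => p.step i }
  have h1 : (q.length : WithBot ℕ∞) ≤ F.card := by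
    refine le_trans ?_ (ringKrullDim_powerset_le (K := K) F)
    rw [ringKrullDim_quotient]
    exact le_iSup (fun q : LTSeries _ => (q.length : WithBot ℕ∞)) q
  refine h1.trans ?_
  exact_mod_cast hk F hFΓ

lemma srIdeal_powerset_mem_associatedPrimes (hΓ : IsComplex Γ) {F : Finset (Fin m)} (hF : F ∈ Γ)
    (hmax : ∀ G ∈ Γ, F ⊆ G → G = F) :
    srIdeal K F.powerset ∈
      associatedPrimes (MvPolynomial (Fin m) K) (MvPolynomial (Fin m) K ⧸ srIdeal K Γ) := by
  refine isAssociatedPrime_iff.2 ⟨?_, Submodule.Quotient.mk (monomial (expOf F) 1), ?_⟩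
  · rw [srIdeal_powerset_eq_ker]
    exact RingHom.ker_isPrime _
  · ext p
    rw [mul_monomial_mem_srIdeal hΓ F (Γ' := F.powerset), Submodule.mem_colon_singleton,
      ← Submodule.Quotient.mk_smul, Submodule.mem_bot, Submodule.Quotient.mk_eq_zero, smul_eq_mul,
      mul_comm]
    intro H
    rw [Finset.mem_powerset]
    refine ⟨fun h => by rwa [Finset.union_eq_right.2 h], fun h => ?_⟩
    exact Finset.union_eq_right.1 (hmax _ h Finset.subset_union_right)

/-- Cohen–Macaulay complexes are pure. -/
lemma card_eq_of_isCM (hΓ : IsComplex Γ) (hCM : IsCM K (srIdeal K Γ)) {F G : Finset (Fin m)}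
    (hF : F ∈ Γ) (hmax : ∀ H ∈ Γ, F ⊆ H → H = F) (hG : G ∈ Γ) : G.card ≤ F.card := by
  obtain ⟨rs, h0, hreg, hlen⟩ := hCM
  have hreg' := (isWeaklyRegular_map_algebraMap_iff (MvPolynomial (Fin m) K ⧸ srIdeal K Γ)
    (MvPolynomial (Fin m) K ⧸ srIdeal K Γ) rs).1 hreg.toIsWeaklyRegular
  have hprime : (RingHom.ker (constantCoeff (R := K) (σ := Fin m))).IsPrime := RingHom.ker_isPrime _
  have h := length_le_ringKrullDim_of_associatedPrimes
    (srIdeal_powerset_mem_associatedPrimes hΓ hF hmax) (m := RingHom.ker (constantCoeff (R := K) (σ := Fin m)))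
    (fun p hp => ?_) h0 hreg'
  · have h2 := (hlen ▸ card_le_ringKrullDim (K := K) hΓ hG).trans
      (h.trans (ringKrullDim_powerset_le F))
    exact_mod_cast h2
  · rw [mem_srIdeal (isComplex_powerset F)] at hp
    rw [RingHom.mem_ker, constantCoeff_eq]
    by_contra hc
    exact hp 0 hc (by simp)

lemma isCM_of_pure_of_shifted (hΓ : IsComplex Γ) {k : ℕ} (hk : ∀ F ∈ Γ, F.card ≤ k)
    (hex : ∃ F ∈ Γ, F.card = k) (hpure : ∀ F ∈ Γ, ∃ G ∈ Γ, F ⊆ G ∧ G.card = k)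
    (hS : Shifted Γ) : IsCM K (srIdeal K Γ) := by
  obtain ⟨F, hF, hFk⟩ := hex
  have hw : IsWeaklyRegular (MvPolynomial (Fin m) K ⧸ srIdeal K Γ) (esymmList K m k) :=
    isWeaklyRegular_of_shifted_from (fun _ => isWeaklyRegular_esymmList_powerset)
      (add_zero m) hΓ hk hpure (by simp) (fun F hF j hj _ i => hS F hF j hj i)
  have h0 : ∀ p ∈ srIdeal K Γ, constantCoeff p = 0 := by
    intro p hp
    rw [mem_srIdeal hΓ] at hp
    by_contra hc
    exact hp 0 (by rwa [← constantCoeff_eq]) (by simpa using hΓ F hF ∅ (by simp))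
  refine ⟨esymmList K m k, fun r hr => constantCoeff_of_mem_esymmList hr, ⟨?_, ?_⟩, ?_⟩
  · exact (isWeaklyRegular_map_algebraMap_iff _ _ _).2 hw
  · intro htop
    let φ : (MvPolynomial (Fin m) K ⧸ srIdeal K Γ) →+* K :=
      Ideal.Quotient.lift (srIdeal K Γ) constantCoeff h0
    have hle : Ideal.ofList ((esymmList K m k).map (Ideal.Quotient.mk (srIdeal K Γ))) ≤
        RingHom.ker φ := by
      rw [Ideal.ofList, Ideal.span_le]
      intro x hx
      obtain ⟨r, hr, rfl⟩ := List.mem_map.1 hx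
      exact constantCoeff_of_mem_esymmList hr
    have h1 : (1 : MvPolynomial (Fin m) K ⧸ srIdeal K Γ) ∈ RingHom.ker φ := by
      refine hle ?_
      have : (1 : MvPolynomial (Fin m) K ⧸ srIdeal K Γ) ∈
          (⊤ : Submodule (MvPolynomial (Fin m) K ⧸ srIdeal K Γ) _) := trivial
      rw [htop] at this
      simpa using this
    rw [RingHom.mem_ker, map_one] at h1
    exact one_ne_zero h1
  · rw [length_esymmList]
    refine le_antisymm ?_ (ringKrullDim_srIdeal_le hk)
    have := card_le_ringKrullDim (K := K) hΓ hF
    rwa [hFk] at this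

end CohenMacaulay

/-! ### The Stanley–Reisner ideal of the Alexander dual -/

section AlexanderDual

variable {m : ℕ} {Γ : Finset (Finset (Fin m))}

lemma isComplex_alexDual (hΓ : IsComplex Γ) : IsComplex (alexDual Γ) := by
  intro F hF G hG
  simp only [alexDual, Finset.mem_filter, Finset.mem_univ, true_and] at hF ⊢
  exact fun h => hF (hΓ _ h _ (Finset.compl_subset_compl.2 hG))

lemma monomial_mem_srIdeal_alexDual (hΓ : IsComplex Γ) {u : Mono m} :
    monomial u (1 : K) ∈ srIdeal K (alexDual Γ) ↔ u.supportᶜ ∈ Γ := by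
  rw [monomial_mem_srIdeal (isComplex_alexDual hΓ)]
  simp [alexDual]

lemma minGen_srIdeal_alexDual_iff (hΓ : IsComplex Γ) {u : Mono m} :
    MinGen (srIdeal K (alexDual Γ)) u ↔
      ∃ F ∈ Γ, (∀ G ∈ Γ, F ⊆ G → G = F) ∧ u = expOf Fᶜ := by
  simp only [MinGen, monomial_mem_srIdeal_alexDual hΓ]
  constructor
  · rintro ⟨hu, hmin⟩
    have key : ∀ G ∈ Γ, u.supportᶜ ⊆ G → expOf Gᶜ = u := fun G hG hle => by
      by_contra hne
      refine hmin _ (expOf_le_iff.2 ?_) hne (by rwa [support_expOf, compl_compl])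
      intro i hi
      by_contra h
      exact Finset.mem_compl.1 hi (hle (Finset.mem_compl.2 h))
    refine ⟨_, hu, fun G hG hle => ?_, (key _ hu subset_rfl).symm⟩
    rw [← key G hG hle, support_expOf, compl_compl]
  · rintro ⟨F, hF, hmax, rfl⟩
    refine ⟨by rwa [support_expOf, compl_compl], fun v hv hne hmem => hne (le_antisymm hv ?_)⟩
    rw [expOf_le_iff, ← hmax _ hmem, compl_compl]
    rw [Finset.subset_compl_comm, ← support_expOf Fᶜ]
    exact Finsupp.support_mono hv

lemma mdeg_expOf (F : Finset (Fin m)) : mdeg (expOf F) = F.card := by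
  rw [mdeg, Finsupp.sum, support_expOf, Finset.card_eq_sum_ones]
  exact Finset.sum_congr rfl fun i hi => by rw [expOf_apply, if_pos hi]

lemma maxVar_expOf (F : Finset (Fin m)) : maxVar (expOf F) = F.sup fun i => (i : ℕ) + 1 := by
  rw [maxVar, support_expOf]

lemma sqMonomialIdeal_srIdeal_alexDual (hΓ : IsComplex Γ) :
    SqMonomialIdeal (srIdeal K (alexDual Γ)) := by
  refine ⟨fun p hp u hu => ?_, fun u hu i => ?_⟩
  · rw [monomial_mem_srIdeal (isComplex_alexDual hΓ)]
    exact (mem_srIdeal (isComplex_alexDual hΓ)).1 hp u (mem_support_iff.1 hu)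
  · obtain ⟨F, -, -, rfl⟩ := (minGen_srIdeal_alexDual_iff hΓ).1 hu
    rw [expOf_apply]
    split_ifs <;> simp

lemma compl_support_exchange {u : Mono m} {p q : Fin m} (hpq : p < q) (hu : SqFree u)
    (hp : u p = 0) :
    (u - Finsupp.single q 1 + Finsupp.single p 1).supportᶜ = insert q (u.supportᶜ.erase p) := by
  ext i
  have hi := hu i
  simp only [Finset.mem_compl, Finsupp.mem_support_iff, Finsupp.add_apply, Finsupp.tsub_apply,
    Finsupp.single_apply, Finset.mem_insert, Finset.mem_erase, not_not]
  by_cases h1 : i = p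
  · subst h1
    simp [hpq.ne]
  · by_cases h2 : i = q
    · subst h2
      simp [Ne.symm h1]
      omega
    · simp [Ne.symm h1, Ne.symm h2, h1, h2]

lemma sqSStableIdeal_srIdeal_alexDual_iff (hΓ : IsComplex Γ) :
    SqSStableIdeal (srIdeal K (alexDual Γ)) ↔ Shifted Γ := by
  constructor
  · intro h F hF j hj i hji hi
    have hsq : SqFree (expOf Fᶜ) := fun x => by
      rw [expOf_apply]
      split_ifs <;> simp
    have h0 : expOf Fᶜ j = 0 := by simp [expOf_apply, hj]
    have := h.2 (expOf Fᶜ) hsq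
      ((monomial_mem_srIdeal_alexDual hΓ).2 (by rwa [support_expOf, compl_compl])) j i hji
      (by simp [expOf_apply, hi]) h0
    rwa [monomial_mem_srIdeal_alexDual hΓ, compl_support_exchange hji hsq h0, support_expOf,
      compl_compl] at this
  · intro h
    refine ⟨sqMonomialIdeal_srIdeal_alexDual hΓ, fun u hu hmem p q hpq hq hp => ?_⟩
    rw [monomial_mem_srIdeal_alexDual hΓ] at hmem ⊢
    rw [compl_support_exchange hpq hu hp]
    exact h _ hmem p (by simp [hp]) q hpq (by simp [hq])

end AlexanderDual

/-! ### The `h`-vector of a pure shifted complex -/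

section HVector

variable {m : ℕ} {Γ : Finset (Finset (Fin m))}

lemma sum_alternating_choose_mul (D k r : ℕ) :
    ∑ i ∈ Finset.range (k + 1), (-1 : ℤ) ^ (k - i) * ((D - i).choose (k - i) : ℤ) *
      ((if r ≤ i then (D - r).choose (i - r) else 0 : ℕ) : ℤ) = if r = k then 1 else 0 := by
  rcases lt_or_ge k r with hkr | hrk
  · rw [if_neg hkr.ne']
    refine Finset.sum_eq_zero fun i hi => ?_
    rw [Finset.mem_range] at hi
    rw [if_neg (by omega)]
    simp
  · obtain ⟨s, rfl⟩ := Nat.exists_eq_add_of_le hrk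
    rw [add_assoc, Finset.sum_range_add, Finset.sum_eq_zero fun i hi => by
      rw [Finset.mem_range] at hi
      rw [if_neg (by omega)]
      simp, zero_add]
    have hterm : ∀ t ∈ Finset.range (s + 1),
        (-1 : ℤ) ^ (r + s - (r + t)) * ((D - (r + t)).choose (r + s - (r + t)) : ℤ) *
          ((if r ≤ r + t then (D - r).choose (r + t - r) else 0 : ℕ) : ℤ) =
        (-1) ^ s * ((D - r).choose s : ℤ) * ((-1) ^ t * (s.choose t : ℤ)) := by
      intro t ht
      have hts : t ≤ s := Nat.lt_succ_iff.1 (Finset.mem_range.1 ht)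
      have hc : ((D - r).choose s : ℤ) * s.choose t =
          (D - r).choose t * (D - (r + t)).choose (s - t) := by
        rw [← Nat.sub_sub]
        exact_mod_cast Nat.choose_mul hts
      have hs : (-1 : ℤ) ^ (s - t) = (-1) ^ s * (-1) ^ t := by
        obtain ⟨w, rfl⟩ := Nat.exists_eq_add_of_le hts
        rw [Nat.add_sub_cancel_left, ← pow_add, add_right_comm, ← two_mul, pow_add, pow_mul]
        simp
      rw [if_pos (Nat.le_add_right _ _), Nat.add_sub_add_left, Nat.add_sub_cancel_left, hs]
      linear_combination (-(-1) ^ s * (-1) ^ t) * hc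
    rw [Finset.sum_congr rfl hterm, ← Finset.mul_sum, Int.alternating_sum_range_choose]
    rcases Nat.eq_zero_or_pos s with rfl | hs
    · simp
    · simp [hs.ne']

/-- The part of a facet `F` below the largest vertex outside `F`. -/
def restriction (F : Finset (Fin m)) : Finset (Fin m) := F.filter fun x => ∃ y, y ∉ F ∧ x < y

lemma restriction_subset_iff {F H : Finset (Fin m)} :
    restriction F ⊆ H ↔ ∀ x ∈ F, x ∉ H → ∀ y, y ∉ F → y < x := by
  simp only [restriction, Finset.subset_iff, Finset.mem_filter]
  constructor
  · intro h x hx hxH y hy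
    by_contra hyx
    refine hxH (h ⟨hx, y, hy, lt_of_le_of_ne (not_lt.1 hyx) ?_⟩)
    rintro rfl
    exact hy hx
  · rintro h x ⟨hx, y, hy, hxy⟩
    by_contra hxH
    exact (h x hx hxH y hy).not_gt hxy

lemma card_interval {R F : Finset (Fin m)} (hRF : R ⊆ F) (i : ℕ) :
    (F.powerset.filter fun H => R ⊆ H ∧ H.card = i).card =
      if R.card ≤ i then (F.card - R.card).choose (i - R.card) else 0 := by
  split_ifs with h
  · rw [← Finset.card_sdiff_of_subset hRF, ← Finset.card_powersetCard]
    refine Finset.card_bij' (fun H _ => H \ R) (fun H _ => H ∪ R) ?_ ?_ ?_ ?_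
    · intro H hH
      simp only [Finset.mem_filter, Finset.mem_powerset, Finset.mem_powersetCard] at hH ⊢
      exact ⟨Finset.sdiff_subset_sdiff hH.1 subset_rfl, by
        rw [Finset.card_sdiff_of_subset hH.2.1, hH.2.2]⟩
    · intro H hH
      simp only [Finset.mem_filter, Finset.mem_powerset, Finset.mem_powersetCard] at hH ⊢
      refine ⟨Finset.union_subset (hH.1.trans Finset.sdiff_subset) hRF,
        Finset.subset_union_right, ?_⟩
      rw [Finset.card_union_of_disjoint, hH.2, Nat.sub_add_cancel h]
      exact Finset.disjoint_of_subset_left hH.1 Finset.sdiff_disjoint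
    · intro H hH
      simp only [Finset.mem_filter] at hH
      exact Finset.sdiff_union_of_subset hH.2.1
    · intro H hH
      rw [Finset.mem_powersetCard] at hH
      exact Finset.union_sdiff_cancel_right
        (Finset.disjoint_of_subset_left hH.1 Finset.sdiff_disjoint)
  · rw [Finset.card_eq_zero, Finset.filter_eq_empty_iff]
    rintro H - ⟨hRH, rfl⟩
    exact h (Finset.card_le_card hRH)

/-- Every face of a pure shifted complex lies in exactly one of the intervals
`[restriction F, F]`, `F` a facet. -/
lemma card_facets_restriction_subset {D : ℕ} (hpure : ∀ F ∈ Γ, ∃ G ∈ Γ, F ⊆ G ∧ G.card = D)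
    (hS : Shifted Γ) {H : Finset (Fin m)} (hH : H ∈ Γ) :
    ((Γ.filter fun F => F.card = D).filter fun F => H ⊆ F ∧ restriction F ⊆ H).card = 1 := by
  simp only [Finset.filter_filter, restriction_subset_iff]
  rw [Finset.card_eq_one]
  have hne : (Γ.filter fun F => H ⊆ F ∧ F.card = D).Nonempty := by
    obtain ⟨G, hG, h⟩ := hpure H hH
    exact ⟨G, Finset.mem_filter.2 ⟨hG, h⟩⟩
  obtain ⟨F, hF, hmax⟩ := Finset.exists_max_image _ (fun F : Finset (Fin m) => ∑ i ∈ F, (i : ℕ)) hne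
  simp only [Finset.mem_filter] at hF hmax
  obtain ⟨hFΓ, hHF, hFD⟩ := hF
  have hFs : ∀ x ∈ F, x ∉ H → ∀ y, y ∉ F → y < x := by
    intro x hx hxH y hy
    by_contra hyx
    have hxy : x < y := lt_of_le_of_ne (not_lt.1 hyx) (by rintro rfl; exact hy hx)
    have hye : y ∉ F.erase x := fun h => hy (Finset.mem_of_mem_erase h)
    have := hmax (insert y (F.erase x)) ⟨hS F hFΓ x hx y hxy hy,
      (Finset.subset_erase.2 ⟨hHF, hxH⟩).trans (Finset.subset_insert _ _), by
        rw [Finset.card_insert_of_notMem hye, Finset.card_erase_add_one hx, hFD]⟩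
    rw [Finset.sum_insert hye, ← Finset.add_sum_erase F _ hx] at this
    have : x.1 < y.1 := hxy
    omega
  refine ⟨F, Finset.eq_singleton_iff_unique_mem.2
    ⟨Finset.mem_filter.2 ⟨hFΓ, hFD, hHF, hFs⟩, fun G hG => ?_⟩⟩
  obtain ⟨-, hGD, hHG, hGs⟩ := Finset.mem_filter.1 hG
  by_contra hne
  obtain ⟨x, hxG, hxF⟩ : ∃ x ∈ G, x ∉ F := by
    by_contra! h
    exact hne (Finset.eq_of_subset_of_card_le h (by omega))
  obtain ⟨y, hyF, hyG⟩ : ∃ y ∈ F, y ∉ G := by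
    by_contra! h
    exact hne (Finset.eq_of_subset_of_card_le h (by omega)).symm
  exact (hGs x hxG (fun h => hxF (hHF h)) y hyG).asymm (hFs y hyF (fun h => hyG (hHG h)) x hxF)

lemma fNum_eq_sum_facets (hΓ : IsComplex Γ) {D : ℕ}
    (hpure : ∀ F ∈ Γ, ∃ G ∈ Γ, F ⊆ G ∧ G.card = D) (hS : Shifted Γ) (i : ℕ) :
    fNum Γ i = ∑ F ∈ Γ.filter fun F => F.card = D,
      if (restriction F).card ≤ i then (D - (restriction F).card).choose (i - (restriction F).card)
      else 0 := by
  have h := Finset.sum_card_bipartiteAbove_eq_sum_card_bipartiteBelow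
    (s := Γ.filter fun H => H.card = i) (t := Γ.filter fun F => F.card = D)
    (fun H F => H ⊆ F ∧ restriction F ⊆ H)
  have h1 : ∀ H ∈ Γ.filter fun H => H.card = i,
      (Finset.bipartiteAbove (fun H F => H ⊆ F ∧ restriction F ⊆ H)
        (Γ.filter fun F => F.card = D) H).card = 1 := fun H hH =>
    card_facets_restriction_subset hpure hS (Finset.mem_filter.1 hH).1
  rw [Finset.sum_congr rfl h1, ← Finset.card_eq_sum_ones] at h
  rw [fNum, h]
  refine Finset.sum_congr rfl fun F hF => ?_
  rw [Finset.mem_filter] at hF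
  rw [← hF.2, ← card_interval (R := restriction F) (Finset.filter_subset _ F)]
  congr 1
  ext H
  simp only [Finset.bipartiteBelow, Finset.mem_filter, Finset.mem_powerset]
  constructor
  · tauto
  · exact fun h => ⟨⟨hΓ F hF.1 H h.1, h.2.2⟩, h.1, h.2.1⟩

lemma hNum_eq_card_facets (hΓ : IsComplex Γ) {D : ℕ}
    (hpure : ∀ F ∈ Γ, ∃ G ∈ Γ, F ⊆ G ∧ G.card = D) (hS : Shifted Γ) (k : ℕ) :
    hNum Γ D k = ((Γ.filter fun F => F.card = D).filter fun F => (restriction F).card = k).card := by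
  simp only [hNum, fNum_eq_sum_facets hΓ hpure hS, Nat.cast_sum, Finset.mul_sum]
  rw [Finset.sum_comm]
  simp only [sum_alternating_choose_mul, Finset.sum_boole]

lemma card_restriction {D d : ℕ} (hm : m = D + d) {F : Finset (Fin m)} (hF : F.card = D) :
    (restriction F).card + d = Fᶜ.sup fun i => (i : ℕ) + 1 := by
  set μ := Fᶜ.sup fun i => (i : ℕ) + 1 with hμ
  have hμi : ∀ y, y ∉ F → y.1 < μ := fun y hy =>
    Finset.le_sup (f := fun i : Fin m => (i : ℕ) + 1) (Finset.mem_compl.2 hy)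
  have hμm : μ ≤ m := Finset.sup_le fun i _ => i.2
  have hrest : F \ restriction F = Finset.univ.filter fun x : Fin m => μ ≤ x.1 := by
    ext x
    simp only [restriction, Finset.mem_sdiff, Finset.mem_filter, Finset.mem_univ, true_and,
      not_and, not_exists]
    constructor
    · rintro ⟨hx, h⟩
      refine Finset.sup_le fun y hy => ?_
      rw [Finset.mem_compl] at hy
      have h1 := not_lt.1 (h hx y hy)
      exact Fin.lt_def.1 (lt_of_le_of_ne h1 (by rintro rfl; exact hy hx))
    · intro hx
      have hxF : x ∈ F := by
        by_contra h
        exact (hμi x h).not_ge hx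
      exact ⟨hxF, fun _ y hy hxy => by
        have := hμi y hy
        have : x.1 < y.1 := hxy
        omega⟩
  have hlow : (Finset.univ.filter fun x : Fin m => x.1 < μ).card = μ := by
    rw [Fin.card_filter_val_lt, min_eq_right hμm]
  have hsum := Finset.card_filter_add_card_filter_not (s := (Finset.univ : Finset (Fin m)))
    (fun x => x.1 < μ)
  simp only [not_lt, Finset.card_univ, Fintype.card_fin] at hsum
  have hc : Fᶜ.card ≤ μ := by
    rw [← hlow]
    exact Finset.card_le_card fun y hy => by simpa using hμi y (Finset.mem_compl.1 hy)
  rw [Finset.card_compl, Fintype.card_fin] at hc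
  have hsd : (F \ restriction F).card + (restriction F).card = F.card :=
    Finset.card_sdiff_add_card_eq_card (Finset.filter_subset _ F)
  rw [hrest] at hsd
  omega

end HVector

/-- Eagon–Reiner-type correspondence: `Γ` is Cohen–Macaulay and shifted
iff `I_{Γ*}` is squarefree strongly stable generated in degree `d`; moreover then
`ℓ*(I_{Γ*}) = h(Γ)`. -/
theorem stmt17 (n d : ℕ) (hn : 0 < n) (hd : 0 < d) (K : Type) [Field K]
    (Γ : Finset (Finset (Fin (n + d - 1)))) (hΓ : IsComplex Γ)
    (hdim : (∀ F ∈ Γ, F.card ≤ n - 1) ∧ ∃ F ∈ Γ, F.card = n - 1) :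
    ((IsCM K (srIdeal K Γ) ∧ Shifted Γ) ↔
      (SqSStableIdeal (srIdeal K (alexDual Γ)) ∧
        ∀ u : Mono (n + d - 1), MinGen (srIdeal K (alexDual Γ)) u → mdeg u = d)) ∧
    ((IsCM K (srIdeal K Γ) ∧ Shifted Γ) →
      ∀ G : Finset (Mono (n + d - 1)),
        (∀ u, u ∈ G ↔ MinGen (srIdeal K (alexDual Γ)) u) →
        ∀ k : Fin n,
          ((G.filter fun u => maxVar u = (k : ℕ) + d).card : ℤ) =
            hNum Γ (n - 1) (k : ℕ)) := by
  obtain ⟨hle, F₀, hF₀, hF₀n⟩ := hdim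
  have hfacet : IsCM K (srIdeal K Γ) → ∀ F ∈ Γ, (∀ G ∈ Γ, F ⊆ G → G = F) → F.card = n - 1 :=
    fun hCM F hF hmax =>
      le_antisymm (hle F hF) (hF₀n ▸ card_eq_of_isCM hΓ hCM hF hmax hF₀)
  have hpure : (∀ F ∈ Γ, (∀ G ∈ Γ, F ⊆ G → G = F) → F.card = n - 1) →
      ∀ F ∈ Γ, ∃ G ∈ Γ, F ⊆ G ∧ G.card = n - 1 := fun h F hF => by
    obtain ⟨G, hFG, hG⟩ := Γ.exists_le_maximal hF
    exact ⟨G, hG.prop, hFG, h G hG.prop fun H hH hGH => (hG.eq_of_le hH hGH).symm⟩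
  have hmax : ∀ F : Finset (Fin (n + d - 1)), F.card = n - 1 → ∀ G ∈ Γ, F ⊆ G → G = F :=
    fun F hF G hG hFG => (Finset.eq_of_subset_of_card_le hFG (hF ▸ hle G hG)).symm
  have hcompl : ∀ F : Finset (Fin (n + d - 1)), F.card ≤ n - 1 → (Fᶜ.card = d ↔ F.card = n - 1) :=
    fun F hF => by
      rw [Finset.card_compl, Fintype.card_fin]
      omega
  refine ⟨?_, ?_⟩
  · rw [sqSStableIdeal_srIdeal_alexDual_iff hΓ]
    constructor
    · rintro ⟨hCM, hS⟩
      refine ⟨hS, fun u hu => ?_⟩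
      obtain ⟨F, hF, hFmax, rfl⟩ := (minGen_srIdeal_alexDual_iff hΓ).1 hu
      rw [mdeg_expOf, hcompl F (hle F hF)]
      exact hfacet hCM F hF hFmax
    · rintro ⟨hS, hdeg⟩
      refine ⟨isCM_of_pure_of_shifted hΓ hle ⟨F₀, hF₀, hF₀n⟩ (hpure fun F hF hFmax => ?_) hS, hS⟩
      have := hdeg _ ((minGen_srIdeal_alexDual_iff hΓ).2 ⟨F, hF, hFmax, rfl⟩)
      rwa [mdeg_expOf, hcompl F (hle F hF)] at this
  · rintro ⟨hCM, hS⟩ G hG k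
    rw [hNum_eq_card_facets hΓ (hpure (hfacet hCM)) hS]
    congr 1
    symm
    refine Finset.card_bij (fun F _ => expOf Fᶜ) (fun F hF => ?_) (fun F _ F' _ h => ?_)
      (fun u hu => ?_)
    · simp only [Finset.mem_filter] at hF
      rw [Finset.mem_filter, hG, minGen_srIdeal_alexDual_iff hΓ, maxVar_expOf,
        ← card_restriction (D := n - 1) (d := d) (by omega) hF.1.2, hF.2]
      exact ⟨⟨F, hF.1.1, hmax F hF.1.2, rfl⟩, rfl⟩
    · rw [← compl_inj_iff, ← support_expOf Fᶜ, h, support_expOf]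
    · rw [Finset.mem_filter, hG, minGen_srIdeal_alexDual_iff hΓ] at hu
      obtain ⟨⟨F, hF, hFmax, rfl⟩, hk⟩ := hu
      have hFc := hfacet hCM F hF hFmax
      rw [maxVar_expOf, ← card_restriction (D := n - 1) (d := d) (by omega) hFc, Nat.add_right_cancel_iff] at hk
      exact ⟨F, by simp [hF, hFc, hk], rfl⟩

end Paper
end
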